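/- Let p be an odd prime, d ≥ 1, and n = p^d. Let a₀, …, a_{n−1} ∈ ℝ³ be nonzero, pairwise linearly independent vectors defining a complexified-real central arrangement of n planes in ℂ³ with Milnor fiber F and basepoint z₀ ∈ F. Suppose that: (i) for every i < n there is a nonzero v ∈ ℂ³ with ℓᵢ(v) = 0 and p dividing m_v (every line of the arrangement contains a multiple point of multiplicity divisible by p); (ii) there exist j < n and a nonzero v₀ ∈ ℂ³ with ℓⱼ(v₀) = 0 such that every nonzero w ∈ ℂ³ with ℓⱼ(w) = 0 and p dividing m_w is a complex scalar multiple of v₀ (the line ker ℓⱼ has only one multiple point of multiplicity divisible by p); and (iii) there is a nonzero u ∈ ℂ³ with ℓⱼ(u) = 0, m_u ≥ 2, and u not a complex scalar multiple of v₀. Then Ab π₁(F, z₀) is isomorphic to the free abelian group ℤ^{p^d − 1}; in particular the first Betti number of F is minimal and H₁(F;ℤ) is torsion-free. -/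

import Mathlib

section
open scoped BigOperators

namespace MF

/-- generic real points -/
structure Gen {n : ℕ} (a : Fin n → Fin 3 → ℝ) : Type where
  val : Fin 3 → ℝ
  prop : ∀ i, a i ⬝ᵥ val ≠ 0

/-- sign of a generic point -/
noncomputable def sg {n : ℕ} {a : Fin n → Fin 3 → ℝ} (x : Gen a) (i : Fin n) : ℤ :=
  if 0 < a i ⬝ᵥ x.1 then 1 else -1

lemma sg_cases {n : ℕ} {a : Fin n → Fin 3 → ℝ} (x : Gen a) (i : Fin n) :
    sg x i = 1 ∨ sg x i = -1 := by
  unfold sg; split_ifs <;> simp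

lemma sg_mul_pos {n : ℕ} {a : Fin n → Fin 3 → ℝ} (x : Gen a) (i : Fin n) :
    0 < (sg x i : ℝ) * (a i ⬝ᵥ x.1) := by
  unfold sg
  split_ifs with h
  · simpa using h
  · have := lt_of_le_of_ne (not_lt.mp h) (x.2 i)
    push_cast; linarith

lemma sg_eq_of_mul_pos {n : ℕ} {a : Fin n → Fin 3 → ℝ} (x : Gen a) (i : Fin n) (r : ℝ)
    (h : 0 < r * (a i ⬝ᵥ x.1)) : sg x i = if 0 < r then 1 else -1 := by
  unfold sg
  rcases lt_or_gt_of_ne (x.2 i) with h1 | h1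
  · rw [if_neg (by linarith), if_neg]
    intro h2; nlinarith
  · rw [if_pos h1, if_pos]
    by_contra h2; nlinarith

lemma sg_eq_iff {n : ℕ} {a : Fin n → Fin 3 → ℝ} (x y : Gen a) (i : Fin n) :
    sg x i = sg y i ↔ 0 < (a i ⬝ᵥ x.1) * (a i ⬝ᵥ y.1) := by
  have hx := x.2 i
  have hy := y.2 i
  unfold sg
  rcases lt_or_gt_of_ne hx with h1 | h1 <;> rcases lt_or_gt_of_ne hy with h2 | h2
  · rw [if_neg (not_lt.mpr h1.le), if_neg (not_lt.mpr h2.le)]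
    simp [mul_pos_of_neg_of_neg h1 h2]
  · rw [if_neg (not_lt.mpr h1.le), if_pos h2]
    simp [(mul_neg_of_neg_of_pos h1 h2).le]
  · rw [if_pos h1, if_neg (not_lt.mpr h2.le)]
    simp [(mul_neg_of_pos_of_neg h1 h2).le]
  · rw [if_pos h1, if_pos h2]
    simp [mul_pos h1 h2]

/-- negation -/
def Gen.neg {n : ℕ} {a : Fin n → Fin 3 → ℝ} (x : Gen a) : Gen a :=
  ⟨-x.1, fun i => by simpa [dotProduct_neg] using x.2 i⟩

lemma sg_neg {n : ℕ} {a : Fin n → Fin 3 → ℝ} (x : Gen a) (i : Fin n) :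
    sg x.neg i = - sg x i := by
  have hx := x.2 i
  unfold sg Gen.neg
  simp only [dotProduct_neg]
  rcases lt_or_gt_of_ne hx with h1 | h1
  · rw [if_pos (by linarith), if_neg (by linarith)]; norm_num
  · rw [if_neg (by linarith), if_pos (by linarith)]

lemma exists_eps {ι : Type*} [Finite ι] (f g : ι → ℝ) (hg : ∀ i, f i = 0 → g i ≠ 0) :
    ∃ ε : ℝ, 0 < ε ∧ ∀ i, (f i ≠ 0 → 0 < f i * (f i + ε * g i)) ∧
      (f i = 0 → 0 < g i * (f i + ε * g i)) := by
  cases nonempty_fintype ι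
  have : ∀ᶠ ε : ℝ in nhdsWithin 0 (Set.Ioi 0), ∀ i, (f i ≠ 0 → 0 < f i * (f i + ε * g i)) ∧
      (f i = 0 → 0 < g i * (f i + ε * g i)) := by
    rw [Filter.eventually_all]
    intro i
    by_cases h : f i = 0
    · filter_upwards [self_mem_nhdsWithin] with ε hε
      refine ⟨fun h' => absurd h h', fun _ => ?_⟩
      have := hg i h
      have h3 : 0 < g i * g i := mul_self_pos.mpr this
      have hε' : 0 < ε := hε
      rw [h]; nlinarith [mul_pos hε' h3]
    · have hc : Filter.Tendsto (fun ε : ℝ => f i * (f i + ε * g i)) (nhds 0)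
          (nhds (f i * (f i + 0 * g i))) := by
        apply Continuous.tendsto; fun_prop
      have h0 : 0 < f i * (f i + 0 * g i) := by
        simpa using mul_self_pos.mpr h
      have := (hc.eventually (lt_mem_nhds h0)).filter_mono (nhdsWithin_le_nhds (s := Set.Ioi 0))
      filter_upwards [this] with ε hε
      exact ⟨fun _ => hε, fun h' => absurd h' h⟩
  obtain ⟨ε, h1, h2⟩ := (this.and self_mem_nhdsWithin).exists
  exact ⟨ε, h2, h1⟩

lemma exists_comp {n : ℕ} {a : Fin n → Fin 3 → ℝ} (P : Fin 3 → ℝ) (x : Gen a) :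
    ∃ y : Gen a, ∀ i, sg y i =
      if a i ⬝ᵥ P = 0 then sg x i else if 0 < a i ⬝ᵥ P then 1 else -1 := by
  obtain ⟨ε, hε, h⟩ := exists_eps (fun i => a i ⬝ᵥ P) (fun i => a i ⬝ᵥ x.1) (fun i _ => x.2 i)
  have hd : ∀ i, a i ⬝ᵥ (P + ε • x.1) = a i ⬝ᵥ P + ε * (a i ⬝ᵥ x.1) := by
    intro i; rw [dotProduct_add, dotProduct_smul, smul_eq_mul]
  refine ⟨⟨P + ε • x.1, fun i => ?_⟩, fun i => ?_⟩
  · rw [hd]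
    by_cases h0 : a i ⬝ᵥ P = 0
    · exact fun h' => by have := (h i).2 h0; simp only [h', mul_zero, lt_irrefl] at this
    · exact fun h' => by have := (h i).1 h0; simp only [h', mul_zero, lt_irrefl] at this
  · by_cases h0 : a i ⬝ᵥ P = 0
    · rw [if_pos h0, sg_eq_iff]
      simp only [hd]
      have := (h i).2 h0
      linarith
    · rw [if_neg h0]
      apply sg_eq_of_mul_pos
      simp only [hd]
      exact (h i).1 h0

/-- composition of a covector with a generic point -/
noncomputable def comp {n : ℕ} {a : Fin n → Fin 3 → ℝ} (P : Fin 3 → ℝ) (x : Gen a) : Gen a :=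
  (exists_comp P x).choose

lemma sg_comp {n : ℕ} {a : Fin n → Fin 3 → ℝ} (P : Fin 3 → ℝ) (x : Gen a) (i : Fin n) :
    sg (comp P x) i = if a i ⬝ᵥ P = 0 then sg x i else if 0 < a i ⬝ᵥ P then 1 else -1 :=
  (exists_comp P x).choose_spec i

lemma exists_avoid {ι : Type*} [Finite ι] (b : ι → Fin 3 → ℝ) (hb : ∀ i, b i ≠ 0) :
    ∃ v : Fin 3 → ℝ, ∀ i, b i ⬝ᵥ v ≠ 0 := by
  obtain ⟨f, hf⟩ := Module.exists_dual_forall_apply_ne_zero (K := ℝ) b hb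
  refine ⟨fun k => f (Pi.single k 1), fun i => ?_⟩
  have : b i ⬝ᵥ (fun k => f (Pi.single k 1)) = f (b i) := by
    conv_rhs => rw [pi_eq_sum_univ' (b i)]
    simp [dotProduct, map_sum]
  rw [this]; exact hf i

lemma exists_gen {n : ℕ} (a : Fin n → Fin 3 → ℝ) (ha : ∀ i, a i ≠ 0) : Nonempty (Gen a) := by
  obtain ⟨v, hv⟩ := exists_avoid a ha
  exact ⟨⟨v, hv⟩⟩

lemma gallery {n : ℕ} {a : Fin n → Fin 3 → ℝ}
    (hind : ∀ i j : Fin n, i ≠ j → LinearIndependent ℝ ![a i, a j])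
    (C D : Gen a) (hCD : ∃ i, sg C i ≠ sg D i) :
    ∃ (k : Fin n) (C' : Gen a), sg C k ≠ sg D k ∧ sg C' k = sg D k ∧ ∀ i, i ≠ k → sg C' i = sg C i := by
  classical
  -- perturb D
  obtain ⟨v, hv⟩ := exists_avoid (fun q : {q : Fin n × Fin n // q.1 ≠ q.2} =>
      (a q.1.1 ⬝ᵥ C.1) • a q.1.2 - (a q.1.2 ⬝ᵥ C.1) • a q.1.1) (by
    rintro ⟨⟨k, l⟩, hkl⟩ h0
    have := LinearIndependent.pair_iff.mp (hind k l hkl) (-(a l ⬝ᵥ C.1)) (a k ⬝ᵥ C.1) (by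
      simp only at h0
      rw [neg_smul, ← h0]; abel)
    exact C.2 k this.2)
  obtain ⟨ε, hε, h⟩ := exists_eps
    (Sum.elim (fun i => a i ⬝ᵥ D.1) (fun q : {q : Fin n × Fin n // q.1 ≠ q.2} =>
      ((a q.1.1 ⬝ᵥ C.1) • a q.1.2 - (a q.1.2 ⬝ᵥ C.1) • a q.1.1) ⬝ᵥ D.1))
    (Sum.elim (fun i => a i ⬝ᵥ v) (fun q : {q : Fin n × Fin n // q.1 ≠ q.2} =>
      ((a q.1.1 ⬝ᵥ C.1) • a q.1.2 - (a q.1.2 ⬝ᵥ C.1) • a q.1.1) ⬝ᵥ v)) (by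
      rintro (i | q) h0
      · exact absurd h0 (D.2 i)
      · exact hv q)
  set d : Fin 3 → ℝ := D.1 + ε • v with hd
  have hdi : ∀ i, 0 < (a i ⬝ᵥ D.1) * (a i ⬝ᵥ d) := by
    intro i
    have := (h (Sum.inl i)).1 (D.2 i)
    simpa [hd, dotProduct_add, dotProduct_smul] using this
  have hdq : ∀ k l, k ≠ l → (a k ⬝ᵥ C.1) * (a l ⬝ᵥ d) ≠ (a l ⬝ᵥ C.1) * (a k ⬝ᵥ d) := by
    intro k l hkl he
    have h0 : ((a k ⬝ᵥ C.1) • a l - (a l ⬝ᵥ C.1) • a k) ⬝ᵥ d = 0 := by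
      rw [sub_dotProduct, smul_dotProduct, smul_dotProduct, smul_eq_mul, smul_eq_mul, he, sub_self]
    have h1 := h (Sum.inr ⟨(k, l), hkl⟩)
    simp only [Sum.elim_inr] at h1
    have h2 : ((a k ⬝ᵥ C.1) • a l - (a l ⬝ᵥ C.1) • a k) ⬝ᵥ D.1 +
        ε * (((a k ⬝ᵥ C.1) • a l - (a l ⬝ᵥ C.1) • a k) ⬝ᵥ v) = 0 := by
      have := h0
      rw [hd, dotProduct_add, dotProduct_smul, smul_eq_mul] at this
      exact this
    rw [h2] at h1
    simp only [mul_zero, lt_irrefl] at h1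
    exact h1.1 (fun h3 => h1.2 h3)
  let D' : Gen a := ⟨d, fun i h0 => by have := hdi i; rw [h0] at this; simp at this⟩
  have hD' : ∀ i, sg D' i = sg D i := fun i => by
    rw [sg_eq_iff]; have := hdi i; simp only [D']; linarith
  -- crossing times
  let S : Finset (Fin n) := Finset.univ.filter (fun i => sg C i ≠ sg D i)
  have hS : S.Nonempty := by obtain ⟨i, hi⟩ := hCD; exact ⟨i, by simp [S, hi]⟩
  let τ : Fin n → ℝ := fun i => (a i ⬝ᵥ C.1) / ((a i ⬝ᵥ C.1) - (a i ⬝ᵥ d))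
  obtain ⟨k, hkS, hk⟩ := S.exists_min_image τ hS
  have hsep : ∀ i, sg C i ≠ sg D i → (a i ⬝ᵥ C.1) * (a i ⬝ᵥ d) < 0 := by
    intro i hi
    rw [← hD' i, Ne, sg_eq_iff, not_lt] at hi
    exact lt_of_le_of_ne hi (mul_ne_zero (C.2 i) (D'.2 i))
  have hkC : sg C k ≠ sg D k := by simpa [S] using hkS
  let P : Fin 3 → ℝ := C.1 + τ k • (d - C.1)
  have hP : ∀ i, a i ⬝ᵥ P = (a i ⬝ᵥ C.1) - τ k * ((a i ⬝ᵥ C.1) - (a i ⬝ᵥ d)) := by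
    intro i
    simp only [P, dotProduct_add, dotProduct_smul, dotProduct_sub, smul_eq_mul]; ring
  have hden : ∀ i, sg C i ≠ sg D i → (a i ⬝ᵥ C.1) * ((a i ⬝ᵥ C.1) - (a i ⬝ᵥ d)) > 0 := by
    intro i hi
    have := hsep i hi
    nlinarith [mul_self_nonneg (a i ⬝ᵥ C.1)]
  have hτ0 : 0 < τ k := by
    have := hden k hkC
    simp only [τ]
    rcases lt_or_gt_of_ne (C.2 k) with h1 | h1
    · exact div_pos_of_neg_of_neg h1 (by nlinarith)
    · exact div_pos h1 (by nlinarith)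
  have hτ1 : τ k < 1 := by
    have h1 := hden k hkC
    have h2 := hsep k hkC
    simp only [τ]
    rcases lt_or_gt_of_ne (C.2 k) with h3 | h3
    · have : (a k ⬝ᵥ C.1) - (a k ⬝ᵥ d) < 0 := by nlinarith
      rw [div_lt_one_of_neg this]; nlinarith
    · have : (a k ⬝ᵥ C.1) - (a k ⬝ᵥ d) > 0 := by nlinarith
      rw [div_lt_one this]; nlinarith
  have hPk : a k ⬝ᵥ P = 0 := by
    rw [hP]
    have : (a k ⬝ᵥ C.1) - (a k ⬝ᵥ d) ≠ 0 := by
      have := hden k hkC; intro h0; rw [h0] at this; simp at this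
    simp only [τ]; field_simp; ring
  have hPi : ∀ i, i ≠ k → 0 < (a i ⬝ᵥ P) * (a i ⬝ᵥ C.1) := by
    intro i hik
    by_cases hi : sg C i = sg D i
    · rw [hP]
      rw [← hD' i, sg_eq_iff] at hi
      have : (a i ⬝ᵥ C.1) * (a i ⬝ᵥ d) > 0 := hi
      have h2 : 0 < (a i ⬝ᵥ C.1) * (a i ⬝ᵥ C.1) := mul_self_pos.mpr (C.2 i)
      nlinarith [mul_pos hτ0 this, mul_pos (sub_pos.mpr hτ1) h2]
    · have hle := hk i (by simp [S, hi])
      have hne : τ k ≠ τ i := by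
        intro he
        have h1 := hden k hkC
        have h2 := hden i hi
        have h1' : (a k ⬝ᵥ C.1) - (a k ⬝ᵥ d) ≠ 0 := fun h0 => by rw [h0] at h1; simp at h1
        have h2' : (a i ⬝ᵥ C.1) - (a i ⬝ᵥ d) ≠ 0 := fun h0 => by rw [h0] at h2; simp at h2
        simp only [τ] at he
        rw [div_eq_div_iff h1' h2'] at he
        exact hdq k i (Ne.symm hik) (by linarith)
      have hlt := lt_of_le_of_ne hle hne
      have h2 := hden i hi
      have h2' : (a i ⬝ᵥ C.1) - (a i ⬝ᵥ d) ≠ 0 := fun h0 => by rw [h0] at h2; simp at h2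
      have h3 : (a i ⬝ᵥ C.1) = τ i * ((a i ⬝ᵥ C.1) - (a i ⬝ᵥ d)) := by
        simp only [τ]; field_simp
      rw [hP]
      have h4 : (a i ⬝ᵥ C.1) - τ k * ((a i ⬝ᵥ C.1) - (a i ⬝ᵥ d))
        = (τ i - τ k) * ((a i ⬝ᵥ C.1) - (a i ⬝ᵥ d)) := by linarith
      rw [h4]
      have := mul_pos (sub_pos.mpr hlt) h2
      linarith
  refine ⟨k, comp P D, hkC, by rw [sg_comp, if_pos hPk], fun i hik => ?_⟩
  have := hPi i hik
  rw [sg_comp, if_neg (fun h0 => by rw [h0] at this; simp at this)]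
  exact (sg_eq_of_mul_pos _ _ _ this).symm

lemma cross_ne {n : ℕ} {a : Fin n → Fin 3 → ℝ}
    (hind : ∀ i j : Fin n, i ≠ j → LinearIndependent ℝ ![a i, a j]) {i j : Fin n} (hij : i ≠ j) :
    crossProduct (a i) (a j) ≠ 0 :=
  crossProduct_ne_zero_iff_linearIndependent.mpr (hind i j hij)

lemma exists_facet {n : ℕ} {a : Fin n → Fin 3 → ℝ}
    (hind : ∀ i j : Fin n, i ≠ j → LinearIndependent ℝ ![a i, a j])
    (k : Fin n) (R : Gen a) :
    ∃ e e' : Gen a, sg e k = sg R k ∧ sg e' k ≠ sg R k ∧ ∀ i, i ≠ k → sg e i = sg e' i := by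
  obtain ⟨v, hv⟩ := exists_avoid (fun i : {i : Fin n // i ≠ k} => crossProduct (a k) (a i.1))
    (fun i => cross_ne hind i.2.symm)
  have h1 : a k ⬝ᵥ crossProduct v (a k) = 0 := by
    rw [triple_product_permutation, cross_self, dotProduct_zero]
  have h2 : ∀ i, i ≠ k → a i ⬝ᵥ crossProduct v (a k) ≠ 0 := by
    intro i hi
    rw [triple_product_permutation, dotProduct_comm, dotProduct_comm]
    have := hv ⟨i, hi⟩
    rwa [dotProduct_comm] at this
  refine ⟨comp (crossProduct v (a k)) R, comp (crossProduct v (a k)) R.neg, ?_, ?_, ?_⟩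
  · rw [sg_comp, if_pos h1]
  · rw [sg_comp, if_pos h1, sg_neg]
    rcases sg_cases R k with h | h <;> rw [h] <;> norm_num
  · intro i hi
    rw [sg_comp, sg_comp, if_neg (h2 i hi), if_neg (h2 i hi)]

lemma only_i {n : ℕ} {a : Fin n → Fin 3 → ℝ}
    (hind : ∀ i j : Fin n, i ≠ j → LinearIndependent ℝ ![a i, a j])
    {i k l : Fin n} {r : Fin 3 → ℝ} (hi : a i ⬝ᵥ r = 0) (hk : a k ⬝ᵥ r ≠ 0)
    (hl : a l ⬝ᵥ r = 0) (hq : a l ⬝ᵥ crossProduct (a i) (a k) = 0) : l = i := by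
  by_contra hli
  apply cross_ne hind hli
  have h : (a k ⬝ᵥ r) • crossProduct (a l) (a i) = 0 := by
    simp only [dotProduct, Fin.sum_univ_three] at hi hk hl hq ⊢
    simp only [cross_apply] at hq ⊢
    simp at hq
    ext c
    fin_cases c <;> simp [-mul_eq_zero]
    · linear_combination -((a k 1 * a l 2 - a k 2 * a l 1) * hi + (a i 1 * a k 2 - a i 2 * a k 1) * hl) + r 0 * hq
    · linear_combination -((a k 2 * a l 0 - a k 0 * a l 2) * hi + (a i 2 * a k 0 - a i 0 * a k 2) * hl) + r 1 * hq
    · linear_combination -((a k 0 * a l 1 - a k 1 * a l 0) * hi + (a i 0 * a k 1 - a i 1 * a k 0) * hl) + r 2 * hq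
  exact (smul_eq_zero.mp h).resolve_left hk

end MF
end

section
open scoped BigOperators

namespace MF

variable {n : ℕ} {a : Fin n → Fin 3 → ℝ}

/-- combinatorial datum describing generators and relations of the fundamental group -/
structure Datum (a : Fin n → Fin 3 → ℝ) (G : Type*) [Group G] where
  γ : Gen a → Gen a → G
  C0 : Gen a
  R0 : Gen a
  hC0 : ∀ x, γ C0 x = 1
  hR0 : ∀ C, γ C R0 = 1
  rel : ∀ C D x y, (∀ i, sg C i = sg D i ∨ sg x i = sg y i) →
    γ C x * (γ D x)⁻¹ = γ C y * (γ D y)⁻¹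
  w : G →* Multiplicative (Fin n → ℤ)
  κ : ℤ
  hκ : κ = 1 ∨ κ = -1
  hw : ∀ C x i, 4 * (w (γ C x)).toAdd i = κ * ((sg C i - sg C0 i) * (sg x i - sg R0 i))
  gen : Subgroup.closure (Set.range (fun q : Gen a × Gen a => γ q.1 q.2)) = ⊤

namespace Datum

variable {G : Type*} [Group G] (Δ : Datum a G)

lemma rel' (C D x y : Gen a) (h : ∀ i, sg C i = sg D i ∨ sg x i = sg y i) :
    (Δ.γ C x)⁻¹ * Δ.γ C y = (Δ.γ D x)⁻¹ * Δ.γ D y := by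
  have := Δ.rel C D x y h
  rw [mul_inv_eq_iff_eq_mul] at this
  rw [this]; group

/-- exchange the two roles -/
def swap : Datum a G where
  γ := fun x C => (Δ.γ C x)⁻¹
  C0 := Δ.R0
  R0 := Δ.C0
  hC0 := fun x => by rw [Δ.hR0, inv_one]
  hR0 := fun x => by rw [Δ.hC0, inv_one]
  rel := fun C D x y h => by
    simp only [inv_inv]
    exact Δ.rel' x y C D (fun i => (h i).symm)
  w := Δ.w
  κ := -Δ.κ
  hκ := by rcases Δ.hκ with h | h <;> rw [h] <;> simp
  hw := fun C x i => by
    have := Δ.hw x C i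
    rw [map_inv]
    simp only [toAdd_inv, Pi.neg_apply]
    linear_combination -this
  gen := by
    rw [eq_top_iff, ← Δ.gen, Subgroup.closure_le]
    rintro _ ⟨⟨C, x⟩, rfl⟩
    have : (Δ.γ C x)⁻¹ ∈ Subgroup.closure
      (Set.range (fun q : Gen a × Gen a => (Δ.γ q.2 q.1)⁻¹)) :=
      Subgroup.subset_closure ⟨(x, C), rfl⟩
    simpa using Subgroup.inv_mem _ this

/-- total degree -/
def deg (g : G) : ℤ := ∑ i, (Δ.w g).toAdd i

lemma deg_mul (g h : G) : Δ.deg (g * h) = Δ.deg g + Δ.deg h := by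
  simp [deg, Finset.sum_add_distrib]

lemma deg_inv (g : G) : Δ.deg g⁻¹ = - Δ.deg g := by
  simp [deg]

lemma deg_zpow (g : G) (k : ℤ) : Δ.deg (g ^ k) = k * Δ.deg g := by
  simp [deg, Finset.mul_sum]

/-- edge pair -/
def g (C x y : Gen a) : G := (Δ.γ C x)⁻¹ * Δ.γ C y

lemma g_trans (C x y z : Gen a) : Δ.g C x y * Δ.g C y z = Δ.g C x z := by
  simp only [g]; group

lemma g_inv (C x y : Gen a) : (Δ.g C x y)⁻¹ = Δ.g C y x := by
  simp only [g]; group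

lemma g_rel (C D x y : Gen a) (h : ∀ i, sg C i = sg D i ∨ sg x i = sg y i) :
    Δ.g C x y = Δ.g D x y := Δ.rel' C D x y h

lemma w_g (C x y : Gen a) (i : Fin n) :
    4 * (Δ.w (Δ.g C x y)).toAdd i = Δ.κ * ((sg C i - sg Δ.C0 i) * (sg y i - sg x i)) := by
  have h1 := Δ.hw C x i
  have h2 := Δ.hw C y i
  simp only [g, map_mul, map_inv, toAdd_mul, toAdd_inv, Pi.add_apply, Pi.neg_apply]
  linear_combination h2 - h1

lemma w_gg (C D x y : Gen a) (i : Fin n) :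
    4 * (Δ.w (Δ.g C x y * Δ.g D y x)).toAdd i =
      Δ.κ * ((sg C i - sg D i) * (sg y i - sg x i)) := by
  have h1 := Δ.w_g C x y i
  have h2 := Δ.w_g D y x i
  simp only [map_mul, toAdd_mul, Pi.add_apply]
  linear_combination h2 + h1

lemma γ_eq_of_left {C D : Gen a} (h : ∀ i, sg C i = sg D i) (x : Gen a) :
    Δ.γ C x = Δ.γ D x := by
  have := Δ.rel C D x Δ.R0 (fun i => Or.inl (h i))
  rw [Δ.hR0, Δ.hR0, inv_one, mul_one, mul_inv_eq_one] at this
  exact this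

/-- C is in the star of P -/
def star (P : Fin 3 → ℝ) (C : Gen a) : Prop :=
  ∀ i, a i ⬝ᵥ P ≠ 0 → sg C i = if 0 < a i ⬝ᵥ P then 1 else -1

lemma star_comp (P : Fin 3 → ℝ) (x : Gen a) : star P (comp P x) := by
  intro i hi; rw [sg_comp, if_neg hi]

lemma sg_comp_of_star {P : Fin 3 → ℝ} {C : Gen a} (h : star P C) (i : Fin n) :
    sg (comp P C) i = sg C i := by
  rw [sg_comp]
  by_cases h0 : a i ⬝ᵥ P = 0
  · rw [if_pos h0]
  · rw [if_neg h0, h i h0]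

/-- multiplicity of a real vector -/
noncomputable def mult (a : Fin n → Fin 3 → ℝ) (P : Fin 3 → ℝ) : ℕ :=
  Nat.card {i : Fin n // a i ⬝ᵥ P = 0}

lemma sum_mult (P : Fin 3 → ℝ) (f : Fin n → ℤ) (c : ℤ)
    (h0 : ∀ i, a i ⬝ᵥ P = 0 → f i = c) (h1 : ∀ i, a i ⬝ᵥ P ≠ 0 → f i = 0) :
    ∑ i, f i = c * mult a P := by
  classical
  have : ∀ i, f i = if a i ⬝ᵥ P = 0 then c else 0 := by
    intro i; split_ifs with h
    · exact h0 i h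
    · exact h1 i h
  simp_rw [this]
  rw [← Finset.sum_filter, Finset.sum_const, mult, Nat.card_eq_fintype_card, Fintype.card_subtype,
    nsmul_eq_mul, mul_comm]

/-- the local central element seen from the real side -/
noncomputable def cr (P : Fin 3 → ℝ) (x : Gen a) : G :=
  (Δ.γ (comp P x) x)⁻¹ * Δ.γ (comp P x) x.neg * (Δ.γ (comp P x.neg) x.neg)⁻¹ *
    Δ.γ (comp P x.neg) x

/-- the local central element seen from the imaginary side -/
noncomputable def ci (P : Fin 3 → ℝ) (η : Gen a) : G :=
  Δ.γ (comp P η) η.neg * (Δ.γ (comp P η.neg) η.neg)⁻¹ * Δ.γ (comp P η.neg) η *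
    (Δ.γ (comp P η) η)⁻¹

lemma or_aux {s t u v : ℤ} (hs : s = 1 ∨ s = -1) (ht : t = 1 ∨ t = -1)
    (h1 : s = t → u = v) (h2 : s = -t → u = v) : u = v := by
  rcases hs with rfl | rfl <;> rcases ht with rfl | rfl <;> first | exact h1 rfl | exact h2 (by norm_num)

lemma comp_aux (P : Fin 3 → ℝ) (η x y : Gen a) (h : ∀ i, sg y i = - sg η i) (i : Fin n) :
    sg (comp P η) i = sg (comp P x) i ∨ sg x i = sg y i := by
  by_cases h0 : a i ⬝ᵥ P = 0
  · rw [sg_comp, sg_comp, if_pos h0, if_pos h0, h]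
    rcases sg_cases η i with h1 | h1 <;> rcases sg_cases x i with h2 | h2 <;> rw [h1, h2] <;> simp
  · left; rw [sg_comp, sg_comp, if_neg h0, if_neg h0]

lemma central_aux (P : Fin 3 → ℝ) (η x : Gen a) :
    Δ.γ (comp P η) x * Δ.cr P x = Δ.ci P η * Δ.γ (comp P η) x := by
  have e1 := Δ.rel (comp P η) (comp P x) x η.neg (comp_aux P η x η.neg (sg_neg η))
  have e2 := Δ.rel (comp P x) (comp P η.neg) η.neg x.neg
    (comp_aux P x η.neg x.neg (sg_neg x))
  have e3 := Δ.rel (comp P η.neg) (comp P x.neg) x.neg η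
    (comp_aux P η.neg x.neg η (fun i => by rw [sg_neg, neg_neg]))
  have e4 := Δ.rel (comp P x.neg) (comp P η) η x
    (comp_aux P x.neg η x (fun i => by rw [sg_neg, neg_neg]))
  simp only [cr, ci]
  generalize Δ.γ (comp P η) x = A1 at *
  generalize Δ.γ (comp P x) x = A2 at *
  generalize Δ.γ (comp P η) η.neg = A3 at *
  generalize Δ.γ (comp P x) η.neg = A4 at *
  generalize Δ.γ (comp P x) x.neg = A6 at *
  generalize Δ.γ (comp P η.neg) x.neg = A7 at *
  generalize Δ.γ (comp P x.neg) x.neg = A8 at *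
  generalize Δ.γ (comp P η.neg) η = A9 at *
  generalize Δ.γ (comp P x.neg) η = A10 at *
  generalize Δ.γ (comp P η) η = A11 at *
  generalize Δ.γ (comp P x.neg) x = A12 at *
  generalize Δ.γ (comp P η.neg) η.neg = A13 at *
  have f2 : A6 = A4 * A13⁻¹ * A7 := by rw [e2]; group
  have f3 : A7 * A8⁻¹ = A9 * A10⁻¹ := e3
  have f4 : A12 = A10 * A11⁻¹ * A1 := by rw [e4]; group
  calc A1 * (A2⁻¹ * A6 * A8⁻¹ * A12) = (A1 * A2⁻¹) * A6 * A8⁻¹ * A12 := by group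
    _ = (A3 * A4⁻¹) * (A4 * A13⁻¹ * A7) * A8⁻¹ * A12 := by rw [e1, f2]
    _ = A3 * A13⁻¹ * (A7 * A8⁻¹) * A12 := by group
    _ = A3 * A13⁻¹ * (A9 * A10⁻¹) * (A10 * A11⁻¹ * A1) := by rw [f3, f4]
    _ = _ := by group

/-- the local central element -/
noncomputable def cc (P : Fin 3 → ℝ) : G := Δ.cr P Δ.R0

lemma ci_eq (P : Fin 3 → ℝ) (η : Gen a) : Δ.ci P η = Δ.cc P := by
  have := Δ.central_aux P η Δ.R0
  rw [Δ.hR0, one_mul, mul_one] at this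
  exact this.symm

lemma commute_cc {P : Fin 3 → ℝ} {C D : Gen a} (hC : star P C) (hD : star P D) (x : Gen a) :
    Commute (Δ.cc P) (Δ.γ C x * (Δ.γ D x)⁻¹) := by
  have h1 := Δ.central_aux P C x
  have h2 := Δ.central_aux P D x
  rw [ci_eq, Δ.γ_eq_of_left (sg_comp_of_star hC)] at h1
  rw [ci_eq, Δ.γ_eq_of_left (sg_comp_of_star hD)] at h2
  have h3 : (Δ.γ D x)⁻¹ * Δ.cc P = Δ.cr P x * (Δ.γ D x)⁻¹ := by
    rw [inv_mul_eq_iff_eq_mul, ← mul_assoc, h2]; group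
  show _ * _ = _ * _
  rw [mul_assoc, h3, ← mul_assoc, ← mul_assoc, h1]

lemma deg_cc (P : Fin 3 → ℝ) : Δ.deg (Δ.cc P) = -Δ.κ * mult a P := by
  have h : Δ.cc P = Δ.g (comp P Δ.R0) Δ.R0 Δ.R0.neg * Δ.g (comp P Δ.R0.neg) Δ.R0.neg Δ.R0 := by
    simp only [cc, cr, g]; group
  have key := Δ.w_gg (comp P Δ.R0) (comp P Δ.R0.neg) Δ.R0 Δ.R0.neg
  rw [← h] at key
  apply sum_mult
  · intro i hi
    have := key i
    rw [sg_comp, sg_comp, if_pos hi, if_pos hi, sg_neg] at this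
    rcases sg_cases Δ.R0 i with h1 | h1 <;> rw [h1] at this <;> linarith
  · intro i hi
    have := key i
    rw [sg_comp, sg_comp, if_neg hi, if_neg hi, sub_self, zero_mul, mul_zero] at this
    linarith

lemma cc_zero_central (x : G) : Commute (Δ.cc 0) x := by
  have hs : ∀ C : Gen a, star 0 C := fun C i hi => absurd (dotProduct_zero _) hi
  have : x ∈ Subgroup.closure (Set.range (fun q : Gen a × Gen a => Δ.γ q.1 q.2)) := by
    rw [Δ.gen]; trivial
  have hle : Subgroup.closure (Set.range (fun q : Gen a × Gen a => Δ.γ q.1 q.2)) ≤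
      Subgroup.centralizer {Δ.cc 0} := by
    rw [Subgroup.closure_le]
    rintro _ ⟨⟨C, x⟩, rfl⟩
    have := Δ.commute_cc (hs C) (hs Δ.C0) x
    rw [Δ.hC0, inv_one, mul_one] at this
    rw [SetLike.mem_coe, Subgroup.mem_centralizer_singleton_iff]
    exact this.symm.eq
  exact (Subgroup.mem_centralizer_singleton_iff.mp (hle this)).symm

lemma deg_cc_zero : Δ.deg (Δ.cc 0) = -Δ.κ * n := by
  rw [deg_cc]
  congr 1
  simp [mult]

variable (hK : ∀ x y : G, Δ.deg x = 0 → Δ.deg y = 0 → Commute x y)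

include hK in
lemma commute_of {c x y : G} (hc : IsCoprime (Δ.deg c) (n : ℤ)) (hx : Commute c x)
    (hy : Commute c y) : Commute x y := by
  have hc' : IsCoprime (Δ.deg c) (Δ.deg (Δ.cc 0)) := by
    rw [deg_cc_zero]
    rcases Δ.hκ with h | h <;> rw [h]
    · simpa using hc.neg_right
    · simpa using hc
  obtain ⟨u, v, huv⟩ := hc'
  set τ := c ^ u * Δ.cc 0 ^ v with hτ
  have hd : Δ.deg τ = 1 := by rw [hτ, deg_mul, deg_zpow, deg_zpow, huv]
  have hτx : Commute τ x := (hx.zpow_left u).mul_left ((Δ.cc_zero_central x).zpow_left v)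
  have hτy : Commute τ y := (hy.zpow_left u).mul_left ((Δ.cc_zero_central y).zpow_left v)
  have key := hK (x * τ ^ (- Δ.deg x)) (y * τ ^ (- Δ.deg y))
    (by rw [deg_mul, deg_zpow, hd]; ring) (by rw [deg_mul, deg_zpow, hd]; ring)
  have ex : x = (x * τ ^ (- Δ.deg x)) * τ ^ (Δ.deg x) := by group
  have ey : y = (y * τ ^ (- Δ.deg y)) * τ ^ (Δ.deg y) := by group
  have h1 : ∀ k : ℤ, Commute (τ ^ k) (x * τ ^ (- Δ.deg x)) := fun k =>
    (hτx.mul_right ((Commute.refl τ).zpow_right _)).zpow_left k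
  have h2 : ∀ k : ℤ, Commute (τ ^ k) (y * τ ^ (- Δ.deg y)) := fun k =>
    (hτy.mul_right ((Commute.refl τ).zpow_right _)).zpow_left k
  rw [ex, ey]
  exact (key.mul_right (h1 _).symm).mul_left ((h2 _).mul_right (Commute.zpow_zpow_self τ _ _))

include hK in
lemma local_comm {P : Fin 3 → ℝ} (hP : IsCoprime (mult a P : ℤ) (n : ℤ)) {C D C' D' : Gen a}
    (hC : star P C) (hD : star P D) (hC' : star P C') (hD' : star P D') (x x' : Gen a) :
    Commute (Δ.γ C x * (Δ.γ D x)⁻¹) (Δ.γ C' x' * (Δ.γ D' x')⁻¹) := by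
  refine Δ.commute_of hK (c := Δ.cc P) ?_ (Δ.commute_cc hC hD x) (Δ.commute_cc hC' hD' x')
  rw [deg_cc]
  rcases Δ.hκ with h | h <;> rw [h]
  · simpa using hP.neg_left
  · simpa using hP

include hK in
lemma local_comm' {P : Fin 3 → ℝ} (hP : IsCoprime (mult a P : ℤ) (n : ℤ)) {x y x' y' : Gen a}
    (hx : star P x) (hy : star P y) (hx' : star P x') (hy' : star P y') (C C' : Gen a) :
    Commute (Δ.g C x y) (Δ.g C' x' y') := by
  have := Δ.swap.local_comm (fun x y h1 h2 => hK x y h1 h2) hP hx hy hx' hy' C C'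
  simpa [swap, g] using this

/-- C is good for the subgroup Z -/
def InC (Z : Subgroup G) (C : Gen a) : Prop := ∀ x, Δ.γ C x ∈ Z

lemma inC_congr {Z : Subgroup G} {C D : Gen a} (h : ∀ i, sg C i = sg D i) (hC : Δ.InC Z C) :
    Δ.InC Z D := fun x => by rw [← Δ.γ_eq_of_left h]; exact hC x

lemma inC_C0 (Z : Subgroup G) : Δ.InC Z Δ.C0 := fun x => by rw [Δ.hC0]; exact Z.one_mem

lemma InC.g {Z : Subgroup G} {C : Gen a} (hC : Δ.InC Z C) (x y : Gen a) : Δ.g C x y ∈ Z :=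
  Z.mul_mem (Z.inv_mem (hC x)) (hC y)

lemma sg_ne {x : Gen a} {y z : Gen a} {i : Fin n} (h1 : sg x i ≠ sg z i) (h2 : sg y i ≠ sg z i) :
    sg x i = sg y i := by
  rcases sg_cases x i with h | h <;> rcases sg_cases y i with h' | h' <;>
    rcases sg_cases z i with h'' | h'' <;> simp_all

lemma inC_step {Z : Subgroup G} {C C' : Gen a} {k : Fin n} (hC : Δ.InC Z C)
    (hCC' : ∀ i, i ≠ k → sg C' i = sg C i) {x x' : Gen a} (hxk : sg x k ≠ sg x' k)
    (hxx' : ∀ i, i ≠ k → sg x i = sg x' i) (hg : Δ.g C' x x' ∈ Z) : Δ.InC Z C' := by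
  wlog hx : sg x k = sg Δ.R0 k generalizing x x'
  · refine this (x := x') (x' := x) hxk.symm (fun i hi => (hxx' i hi).symm) ?_ ?_
    · rw [← g_inv]; exact Z.inv_mem hg
    · exact sg_ne hxk.symm (Ne.symm hx)
  have hR : ∀ y, sg y k = sg Δ.R0 k → Δ.γ C' y = Δ.γ C y := by
    intro y hy
    have := Δ.rel C' C y Δ.R0 (fun i => by
      by_cases hi : i = k
      · right; rw [hi, hy]
      · left; exact hCC' i hi)
    rw [Δ.hR0, Δ.hR0, inv_one, mul_one, mul_inv_eq_one] at this
    exact this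
  have hx1 : Δ.γ C' x ∈ Z := by rw [hR x hx]; exact hC x
  have hx2 : Δ.γ C' x' ∈ Z := by
    have : Δ.γ C' x' = Δ.γ C' x * Δ.g C' x x' := by simp [Datum.g]
    rw [this]; exact Z.mul_mem hx1 hg
  intro y
  by_cases hy : sg y k = sg Δ.R0 k
  · rw [hR y hy]; exact hC y
  · have := Δ.rel C' C y x' (fun i => by
      by_cases hi : i = k
      · right; rw [hi]; exact sg_ne (z := Δ.R0) hy (by rw [← hx]; exact hxk.symm)
      · left; exact hCC' i hi)
    rw [mul_inv_eq_iff_eq_mul] at this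
    rw [this]
    exact Z.mul_mem (Z.mul_mem hx2 (Z.inv_mem (hC x'))) (hC y)

variable (hind : ∀ i j : Fin n, i ≠ j → LinearIndependent ℝ ![a i, a j])

include hind in
lemma inC_wall {Z : Subgroup G} {C C' C2 : Gen a} {k : Fin n} (hC : Δ.InC Z C)
    (hCC' : ∀ i, i ≠ k → sg C' i = sg C i) (hC2 : Δ.InC Z C2) (h2 : sg C2 k = sg C' k) :
    Δ.InC Z C' := by
  obtain ⟨e, e', h3, h4, h5⟩ := exists_facet hind k C
  refine Δ.inC_step hC hCC' (x := e) (x' := e') (by rw [h3]; exact h4.symm) h5 ?_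
  rw [Δ.g_rel C' C2 e e' (fun i => by
    by_cases hi : i = k
    · left; rw [hi, h2]
    · right; exact h5 i hi)]
  exact hC2.g Δ e e'

include hind in
/-- walking along galleries -/
lemma walk (Pr : Gen a → Prop) (S : Set (Fin n))
    (hcongr : ∀ C D, (∀ i, sg C i = sg D i) → Pr C → Pr D)
    (hstep : ∀ (C C' : Gen a) (k : Fin n), k ∈ S → sg C k ≠ sg C' k →
      (∀ i, i ≠ k → sg C' i = sg C i) → Pr C → Pr C')
    (C D : Gen a) (hS : ∀ i, sg C i ≠ sg D i → i ∈ S) (hC : Pr C) : Pr D := by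
  classical
  obtain ⟨N, hN⟩ : ∃ N, (Finset.univ.filter (fun i => sg C i ≠ sg D i)).card = N := ⟨_, rfl⟩
  induction N using Nat.strong_induction_on generalizing C with
  | _ N ih =>
  by_cases h : ∃ i, sg C i ≠ sg D i
  · obtain ⟨k, C', h1, h2, h3⟩ := gallery hind C D h
    have hlt : (Finset.univ.filter (fun i => sg C' i ≠ sg D i)).card < N := by
      rw [← hN]
      apply Finset.card_lt_card
      rw [Finset.ssubset_iff_of_subset]
      · exact ⟨k, by simp [h1], by simp [h2]⟩
      · intro i hi
        have hik : i ≠ k := by rintro rfl; simp [h2] at hi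
        simp only [Finset.mem_filter, Finset.mem_univ, true_and] at hi ⊢
        rwa [h3 i hik] at hi
    refine ih _ hlt C' (fun i hi => hS i ?_) (hstep C C' k (hS k h1) (by rw [h2]; exact h1) h3 hC) rfl
    by_cases hik : i = k
    · rw [hik]; exact h1
    · rwa [h3 i hik] at hi
  · push Not at h
    exact hcongr C D h hC

end Datum
end MF
end

section
open scoped BigOperators

namespace MF
variable {n : ℕ} {a : Fin n → Fin 3 → ℝ}
namespace Datum
variable {G : Type*} [Group G] (Δ : Datum a G)

lemma sg_comp_neg (P : Fin 3 → ℝ) (x : Gen a) (l : Fin n) :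
    sg (comp (-P) x) l = if a l ⬝ᵥ P = 0 then sg x l else if 0 < a l ⬝ᵥ P then -1 else 1 := by
  have hn : a l ⬝ᵥ (-P) = - (a l ⬝ᵥ P) := dotProduct_neg _ _
  rw [sg_comp, hn]
  by_cases h : a l ⬝ᵥ P = 0
  · rw [if_pos h, if_pos (by rw [h, neg_zero])]
  · rw [if_neg h, if_neg (neg_ne_zero.mpr h)]
    rcases lt_or_gt_of_ne h with h' | h'
    · rw [if_pos (by linarith), if_neg (by linarith)]
    · rw [if_neg (by linarith), if_pos (by linarith)]

/-- geometric hypotheses for the algebraic theorem -/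
structure Geo (p d : ℕ) (Δ : Datum a G) where
  hp : Nat.Prime p
  hn : n = p ^ d
  hind : ∀ i j : Fin n, i ≠ j → LinearIndependent ℝ ![a i, a j]
  j : Fin n
  R1 : Gen a
  hR1j : sg R1 j ≠ sg Δ.R0 j
  hR1 : ∀ i, i ≠ j → sg R1 i = sg Δ.R0 i
  h0 : Fin 3 → ℝ
  r : Fin 3 → ℝ
  hh0 : a j ⬝ᵥ h0 = 0
  hr : a j ⬝ᵥ r = 0
  hmult : ∀ s : ℝ, ¬ p ∣ mult a (h0 + s • r)
  hC0 : star h0 Δ.C0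
  hN : ∃ k, a k ⬝ᵥ r ≠ 0

variable {Δ} {p d : ℕ} (Γ : Geo p d Δ)
  (hK : ∀ x y : G, Δ.deg x = 0 → Δ.deg y = 0 → Commute x y)

include Γ in
lemma coprime_of {m : ℕ} (h : ¬ p ∣ m) : IsCoprime (m : ℤ) (n : ℤ) := by
  rw [Γ.hn, Nat.isCoprime_iff_coprime]
  exact ((Nat.Prime.coprime_iff_not_dvd Γ.hp).mpr h).symm.pow_right d

namespace Geo

/-- the base element -/
def t : G := Δ.γ Δ.C0.neg Γ.R1

lemma deg_t : Δ.deg Γ.t = 1 ∨ Δ.deg Γ.t = -1 := by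
  have h1 : Δ.deg Γ.t = (Δ.w Γ.t).toAdd Γ.j := by
    unfold deg
    apply Finset.sum_eq_single
    · intro i _ hi
      have := Δ.hw Δ.C0.neg Γ.R1 i
      rw [Γ.hR1 i hi, sub_self, mul_zero, mul_zero] at this
      unfold t; linarith
    · simp
  rw [h1]
  have := Δ.hw Δ.C0.neg Γ.R1 Γ.j
  have h2 := Γ.hR1j
  rw [sg_neg] at this
  change 4 * (Δ.w Γ.t).toAdd Γ.j = _ at this
  generalize (Δ.w Γ.t).toAdd Γ.j = X at *
  rcases Δ.hκ with h | h <;> rcases sg_cases Δ.C0 Γ.j with h3 | h3 <;>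
    rcases sg_cases Γ.R1 Γ.j with h4 | h4 <;> rcases sg_cases Δ.R0 Γ.j with h5 | h5 <;>
    rw [h, h3, h4, h5] at this <;> omega

/-- centralizer of the base element -/
def Z : Subgroup G := Subgroup.centralizer {Γ.t}

lemma mem_Z {x : G} : x ∈ Γ.Z ↔ Commute Γ.t x := by
  unfold Z
  rw [Subgroup.mem_centralizer_singleton_iff]
  exact ⟨fun h => h.symm, fun h => h.symm⟩

lemma γ_R1 (C D : Gen a) (h : sg C Γ.j = sg D Γ.j) : Δ.γ C Γ.R1 = Δ.γ D Γ.R1 := by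
  have := Δ.rel C D Γ.R1 Δ.R0 (fun i => by
    by_cases hi : i = Γ.j
    · left; rw [hi, h]
    · right; exact Γ.hR1 i hi)
  rw [Δ.hR0, Δ.hR0, inv_one, mul_one, mul_inv_eq_one] at this
  exact this

include hK in
lemma star_all {P : Fin 3 → ℝ} (hPj : a Γ.j ⬝ᵥ P = 0) (hP : ¬ p ∣ mult a P)
    {C D : Gen a} (hC : star P C) (hD : star P D) (hDZ : Δ.InC Γ.Z D) : Δ.InC Γ.Z C := by
  have ht : Γ.t = Δ.γ (comp P Δ.C0.neg) Γ.R1 * (Δ.γ (comp P Δ.C0) Γ.R1)⁻¹ := by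
    rw [Γ.γ_R1 (comp P Δ.C0) Δ.C0 (by rw [sg_comp, if_pos hPj]), Δ.hC0, inv_one, mul_one,
      Γ.γ_R1 (comp P Δ.C0.neg) Δ.C0.neg (by rw [sg_comp, if_pos hPj])]
    rfl
  intro x
  have h1 : Δ.γ C x * (Δ.γ D x)⁻¹ ∈ Γ.Z := by
    rw [mem_Z, ht]
    exact Δ.local_comm hK (coprime_of Γ hP) (star_comp P _) (star_comp P _) hC hD _ _
  have := Γ.Z.mul_mem h1 (hDZ x)
  simpa using this

lemma hj (s : ℝ) : a Γ.j ⬝ᵥ (Γ.h0 + s • Γ.r) = 0 := by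
  rw [dotProduct_add, dotProduct_smul, Γ.hh0, Γ.hr]; simp

include hK in
lemma star_line (s : ℝ) (C : Gen a) (hC : star (Γ.h0 + s • Γ.r) C) : Δ.InC Γ.Z C := by
  let Pr : ℝ → Prop := fun s => ∀ C : Gen a, star (Γ.h0 + s • Γ.r) C → Δ.InC Γ.Z C
  have hloc : IsLocallyConstant Pr := by
    rw [IsLocallyConstant.iff_eventually_eq]
    intro s0
    have hev : ∀ᶠ s in nhds s0, ∀ i : Fin n, a i ⬝ᵥ (Γ.h0 + s0 • Γ.r) ≠ 0 →
        0 < (a i ⬝ᵥ (Γ.h0 + s0 • Γ.r)) * (a i ⬝ᵥ (Γ.h0 + s • Γ.r)) := by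
      rw [Filter.eventually_all]
      intro i
      by_cases hi : a i ⬝ᵥ (Γ.h0 + s0 • Γ.r) = 0
      · exact Filter.Eventually.of_forall (fun s h => absurd hi h)
      · have hc : Continuous (fun s : ℝ => (a i ⬝ᵥ (Γ.h0 + s0 • Γ.r)) *
            (a i ⬝ᵥ (Γ.h0 + s • Γ.r))) := by
          simp only [dotProduct_add, dotProduct_smul]; fun_prop
        have := (hc.tendsto s0).eventually (lt_mem_nhds (mul_self_pos.mpr hi))
        filter_upwards [this] with s hs _ using hs
    filter_upwards [hev] with s hs
    have hsub : ∀ C : Gen a, star (Γ.h0 + s • Γ.r) C → star (Γ.h0 + s0 • Γ.r) C := by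
      intro C hC i hi
      have h1 := hs i hi
      have h2 : a i ⬝ᵥ (Γ.h0 + s • Γ.r) ≠ 0 := fun h => by rw [h] at h1; simp at h1
      rw [hC i h2]
      by_cases h3 : 0 < a i ⬝ᵥ (Γ.h0 + s • Γ.r)
      · rw [if_pos h3, if_pos (pos_of_mul_pos_left h1 h3.le)]
      · rw [if_neg h3, if_neg]
        intro h4
        exact h3 (pos_of_mul_pos_right h1 h4.le)
    apply propext
    constructor
    · intro h C hC
      refine Γ.star_all hK (Γ.hj s0) (Γ.hmult s0) hC (hsub _ (star_comp _ C)) (h _ (star_comp _ C))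
    · intro h C hC
      exact h C (hsub C hC)
  have h00 : Pr 0 := by
    intro C hC
    refine Γ.star_all hK (Γ.hj 0) (Γ.hmult 0) hC (D := Δ.C0) ?_ (Δ.inC_C0 _)
    rw [zero_smul, add_zero]; exact Γ.hC0
  have : Pr s := by
    rw [hloc.apply_eq_of_preconnectedSpace s 0]; exact h00
  exact this C hC

include hK in
lemma both {k : Fin n} (hk : a k ⬝ᵥ Γ.r ≠ 0) (η : Gen a) :
    ∃ C, Δ.InC Γ.Z C ∧ sg C k = sg η k := by
  let s : ℝ := -(a k ⬝ᵥ Γ.h0) / (a k ⬝ᵥ Γ.r)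
  refine ⟨comp (Γ.h0 + s • Γ.r) η, Γ.star_line hK s _ (star_comp _ _), ?_⟩
  rw [sg_comp, if_pos]
  rw [dotProduct_add, dotProduct_smul, smul_eq_mul]
  simp only [s]
  field_simp
  ring

include hK in
lemma walkN {D E : Gen a} (hD : Δ.InC Γ.Z D) (h : ∀ i, sg D i ≠ sg E i → a i ⬝ᵥ Γ.r ≠ 0) :
    Δ.InC Γ.Z E := by
  refine walk Γ.hind (Δ.InC Γ.Z) {i | a i ⬝ᵥ Γ.r ≠ 0} (fun C D h => Δ.inC_congr h) ?_ D E h hD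
  intro C C' k hk _ h3 hC
  obtain ⟨C2, h4, h5⟩ := Γ.both hK hk C'
  exact Δ.inC_wall Γ.hind hC h3 h4 h5

lemma torus {T T' B B' x x' y y' : Gen a}
    (h1 : Δ.g T x x' = Δ.g B x x') (h2 : Δ.g B y y' = Δ.g T y y')
    (h3 : Δ.g B y' x' = Δ.g B' y' x') (h4 : Δ.g T' x' x = Δ.g B' x' x)
    (h5 : Δ.g T x y = Δ.g T' x y) (h6 : Δ.g T' x' y' = Δ.g T x' y')
    (h7 : Δ.g T' y' y = Δ.g B' y' y) (h8 : Δ.g B y x = Δ.g B' y x) :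
    Commute (Δ.g T x y * Δ.g B y x) (Δ.g T x x' * Δ.g T' x' x) := by
  have e1 : (Δ.g T x y * Δ.g B y x) * (Δ.g T x x' * Δ.g T' x' x) = Δ.g T x y' * Δ.g B' y' x := by
    calc (Δ.g T x y * Δ.g B y x) * (Δ.g T x x' * Δ.g T' x' x)
        = Δ.g T x y * (Δ.g B y x * Δ.g B x x') * Δ.g T' x' x := by rw [h1]; group
      _ = Δ.g T x y * (Δ.g B y y' * Δ.g B y' x') * Δ.g T' x' x := by rw [g_trans, g_trans]
      _ = (Δ.g T x y * Δ.g T y y') * (Δ.g B' y' x' * Δ.g B' x' x) := by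
          rw [h2, h3, h4]; group
      _ = _ := by rw [g_trans, g_trans]
  have e2 : (Δ.g T x x' * Δ.g T' x' x) * (Δ.g T x y * Δ.g B y x) = Δ.g T x y' * Δ.g B' y' x := by
    calc (Δ.g T x x' * Δ.g T' x' x) * (Δ.g T x y * Δ.g B y x)
        = Δ.g T x x' * (Δ.g T' x' x * Δ.g T' x y) * Δ.g B y x := by rw [h5]; group
      _ = Δ.g T x x' * (Δ.g T' x' y' * Δ.g T' y' y) * Δ.g B y x := by rw [g_trans, g_trans]
      _ = (Δ.g T x x' * Δ.g T x' y') * (Δ.g B' y' y * Δ.g B' y x) := by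
          rw [h6, h7, h8]; group
      _ = _ := by rw [g_trans, g_trans]
  show _ * _ = _ * _
  rw [e1, e2]

include hK in
lemma step_core {D D' : Gen a} {i : Fin n} (hi : a i ⬝ᵥ Γ.r = 0) (hD : Δ.InC Γ.Z D)
    (hDD' : ∀ l, l ≠ i → sg D' l = sg D l) : Δ.InC Γ.Z D' := by
  obtain ⟨k, hk⟩ := Γ.hN
  have hik : i ≠ k := by rintro rfl; exact hk hi
  set q := crossProduct (a i) (a k) with hq
  have hqi : a i ⬝ᵥ q = 0 := dot_self_cross _ _
  have hqk : a k ⬝ᵥ q = 0 := dot_cross_self _ _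
  have honly : ∀ l, a l ⬝ᵥ q = 0 → a l ⬝ᵥ Γ.r = 0 → l = i := fun l h1 h2 =>
    only_i Γ.hind hi hk h2 h1
  set T := comp Γ.r D with hT
  set B := comp (-Γ.r) D with hB
  set T' := comp Γ.r D' with hT'
  set B' := comp (-Γ.r) D' with hB'
  have sT : ∀ l, sg T l = if a l ⬝ᵥ Γ.r = 0 then sg D l else if 0 < a l ⬝ᵥ Γ.r then 1 else -1 :=
    fun l => sg_comp _ _ _
  have sT' : ∀ l, sg T' l = if a l ⬝ᵥ Γ.r = 0 then sg D' l else if 0 < a l ⬝ᵥ Γ.r then 1 else -1 :=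
    fun l => sg_comp _ _ _
  have sB : ∀ l, sg B l = if a l ⬝ᵥ Γ.r = 0 then sg D l else if 0 < a l ⬝ᵥ Γ.r then -1 else 1 := by
    intro l
    exact sg_comp_neg _ _ _
  have sB' : ∀ l, sg B' l =
      if a l ⬝ᵥ Γ.r = 0 then sg D' l else if 0 < a l ⬝ᵥ Γ.r then -1 else 1 := by
    intro l
    exact sg_comp_neg _ _ _
  have hTZ : Δ.InC Γ.Z T := Γ.walkN hK hD (fun l hl h => hl (by rw [sT, if_pos h]))
  have hBZ : Δ.InC Γ.Z B := Γ.walkN hK hD (fun l hl h => hl (by rw [sB, if_pos h]))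
  let E := Δ.R0
  let E' := Δ.R0.neg
  set x := comp q (comp Γ.r E) with hx
  set x' := comp q (comp Γ.r E') with hx'
  set y := comp q (comp (-Γ.r) E) with hy
  set y' := comp q (comp (-Γ.r) E') with hy'
  have sq : ∀ (P : Fin 3 → ℝ) (X : Gen a) (l : Fin n), a l ⬝ᵥ q ≠ 0 → sg (comp q (comp P X)) l =
      if 0 < a l ⬝ᵥ q then 1 else -1 := fun P X l h => by rw [sg_comp, if_neg h]
  have sx1 : ∀ (X : Gen a) (l : Fin n), a l ⬝ᵥ q = 0 → sg (comp q (comp Γ.r X)) l =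
      if a l ⬝ᵥ Γ.r = 0 then sg X l else if 0 < a l ⬝ᵥ Γ.r then 1 else -1 := fun X l h => by
    rw [sg_comp, if_pos h, sg_comp]
  have sy1 : ∀ (X : Gen a) (l : Fin n), a l ⬝ᵥ q = 0 → sg (comp q (comp (-Γ.r) X)) l =
      if a l ⬝ᵥ Γ.r = 0 then sg X l else if 0 < a l ⬝ᵥ Γ.r then -1 else 1 := fun X l h => by
    rw [sg_comp, if_pos h, sg_comp_neg]
  -- separation facts
  have xx' : ∀ l, l ≠ i → sg x l = sg x' l := by
    intro l hl
    by_cases h : a l ⬝ᵥ q = 0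
    · have hr : a l ⬝ᵥ Γ.r ≠ 0 := fun h' => hl (honly l h h')
      rw [hx, hx', sx1 _ _ h, sx1 _ _ h, if_neg hr, if_neg hr]
    · rw [hx, hx', sq _ _ _ h, sq _ _ _ h]
  have yy' : ∀ l, l ≠ i → sg y l = sg y' l := by
    intro l hl
    by_cases h : a l ⬝ᵥ q = 0
    · have hr : a l ⬝ᵥ Γ.r ≠ 0 := fun h' => hl (honly l h h')
      rw [hy, hy', sy1 _ _ h, sy1 _ _ h, if_neg hr, if_neg hr]
    · rw [hy, hy', sq _ _ _ h, sq _ _ _ h]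
  have xi : sg x i = sg y i := by rw [hx, hy, sx1 _ _ hqi, sy1 _ _ hqi, if_pos hi, if_pos hi]
  have xi' : sg x' i = sg y' i := by
    rw [hx', hy', sx1 _ _ hqi, sy1 _ _ hqi, if_pos hi, if_pos hi]
  have TB : sg T i = sg B i := by rw [sT, sB, if_pos hi, if_pos hi]
  have TB' : sg T' i = sg B' i := by rw [sT', sB', if_pos hi, if_pos hi]
  have TT' : ∀ l, l ≠ i → sg T' l = sg T l := by
    intro l hl; rw [sT, sT', hDD' l hl]
  have BB' : ∀ l, l ≠ i → sg B' l = sg B l := by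
    intro l hl; rw [sB, sB', hDD' l hl]
  have hxi : sg x i ≠ sg x' i := by
    rw [hx, hx', sx1 _ _ hqi, sx1 _ _ hqi, if_pos hi, if_pos hi, sg_neg]
    rcases sg_cases Δ.R0 i with h | h <;> simp only [E] <;> rw [h] <;> norm_num
  have hs : Δ.g T x x' * Δ.g T' x' x ∈ Γ.Z := by
    rw [mem_Z]
    by_cases hpq : p ∣ mult a q
    · -- torus relation
      have hcomm : Commute (Δ.g T x y * Δ.g B y x) (Δ.g T x x' * Δ.g T' x' x) := by
        refine torus (B' := B') (y' := y') ?_ ?_ ?_ ?_ ?_ ?_ ?_ ?_ <;> apply Δ.g_rel <;> intro l <;>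
          by_cases hl : l = i
        · left; rw [hl, TB]
        · right; exact xx' l hl
        · left; rw [hl, TB]
        · right; exact yy' l hl
        · right; rw [hl, xi']
        · left; exact (BB' l hl).symm
        · left; rw [hl, TB']
        · right; exact (xx' l hl).symm
        · right; rw [hl, xi]
        · left; exact (TT' l hl).symm
        · right; rw [hl, xi']
        · left; exact TT' l hl
        · left; rw [hl, TB']
        · right; exact (yy' l hl).symm
        · right; rw [hl, xi]
        · left; exact (BB' l hl).symm
      refine Δ.commute_of hK (c := Δ.g T x y * Δ.g B y x) ?_ ?_ hcomm
      · have key := Δ.w_gg T B x y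
        have hdeg : Δ.deg (Δ.g T x y * Δ.g B y x) = -Δ.κ * mult a q + Δ.κ := by
          have h1 : ∑ l, ((Δ.w (Δ.g T x y * Δ.g B y x)).toAdd l - if l = i then Δ.κ else 0)
              = -Δ.κ * mult a q := by
            apply sum_mult
            · intro l hl
              have := key l
              by_cases hli : l = i
              · rw [if_pos hli]
                rw [hli, TB, sub_self, zero_mul, mul_zero] at this
                rw [hli]; linarith
              · have hr : a l ⬝ᵥ Γ.r ≠ 0 := fun h' => hli (honly l hl h')
                rw [if_neg hli]
                rw [sT, sB, hx, hy, sx1 _ _ hl, sy1 _ _ hl, if_neg hr, if_neg hr, if_neg hr,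
                  if_neg hr] at this
                split_ifs at this <;> linarith
            · intro l hl
              have := key l
              have hli : l ≠ i := by rintro rfl; exact hl hqi
              rw [hx, hy, sq _ _ _ hl, sq _ _ _ hl, sub_self, mul_zero, mul_zero] at this
              rw [if_neg hli]; linarith
          rw [Finset.sum_sub_distrib] at h1
          simp only [Finset.sum_ite_eq', Finset.mem_univ, if_true] at h1
          unfold deg; linarith
        rw [hdeg]
        have hnZ : (n : ℤ) = (p : ℤ) ^ d := by exact_mod_cast Γ.hn
        rw [hnZ]
        apply IsCoprime.pow_right
        obtain ⟨c, hc⟩ := hpq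
        rw [hc]
        rcases Δ.hκ with h | h <;> rw [h]
        · exact ⟨1, c, by push_cast; ring⟩
        · exact ⟨-1, c, by push_cast; ring⟩
      · have : Δ.g T x y * Δ.g B y x ∈ Γ.Z := Γ.Z.mul_mem (hTZ.g Δ _ _) (hBZ.g Δ _ _)
        exact (Γ.mem_Z.mp this).symm
    · obtain ⟨C, hC, hCk⟩ := Γ.both hK hk Δ.C0.neg
      obtain ⟨e, e', he1, he2, he3⟩ := exists_facet Γ.hind k Δ.R0
      have hcop := coprime_of Γ hpq
      have c1 := Δ.local_comm' hK hcop (star_comp q e) (star_comp q e')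
        (star_comp q (comp Γ.r E)) (star_comp q (comp Γ.r E')) C T
      have c2 := Δ.local_comm' hK hcop (star_comp q e) (star_comp q e')
        (star_comp q (comp Γ.r E')) (star_comp q (comp Γ.r E)) C T'
      refine Δ.commute_of hK (c := Δ.g C (comp q e) (comp q e')) ?_ ?_ (c1.mul_right c2)
      · have key := Δ.w_g C (comp q e) (comp q e')
        have hdeg : Δ.deg (Δ.g C (comp q e) (comp q e')) =
            (Δ.w (Δ.g C (comp q e) (comp q e'))).toAdd k := by
          apply Finset.sum_eq_single
          · intro l _ hl
            have := key l
            rw [sg_comp, sg_comp, he3 l hl, sub_self, mul_zero, mul_zero] at this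
            linarith
          · simp
        have h1 : (Δ.w (Δ.g C (comp q e) (comp q e'))).toAdd k = 1 ∨
            (Δ.w (Δ.g C (comp q e) (comp q e'))).toAdd k = -1 := by
          have := key k
          rw [sg_comp, sg_comp, if_pos hqk, if_pos hqk, hCk, sg_neg, he1] at this
          generalize (Δ.w (Δ.g C (comp q e) (comp q e'))).toAdd k = X at *
          rcases Δ.hκ with h | h <;> rcases sg_cases Δ.C0 k with h3 | h3 <;>
            rcases sg_cases e' k with h4 | h4 <;> rcases sg_cases Δ.R0 k with h5 | h5 <;>
            rw [h, h3, h4, h5] at this <;>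
            omega
        rw [hdeg]
        rcases h1 with h1 | h1 <;> rw [h1]
        · exact isCoprime_one_left
        · exact isCoprime_one_left.neg_left
      · exact (Γ.mem_Z.mp (hC.g Δ _ _)).symm
  have hg : Δ.g T' x' x ∈ Γ.Z := (Subgroup.mul_mem_cancel_left _ (hTZ.g Δ x x')).mp hs
  have hT'Z : Δ.InC Γ.Z T' :=
    Δ.inC_step hTZ TT' hxi.symm (fun l hl => (xx' l hl).symm) hg
  exact Δ.inC_wall Γ.hind hD hDD' hT'Z (by rw [sT', if_pos hi])

include hK in
lemma all_inC (D : Gen a) : Δ.InC Γ.Z D := by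
  refine walk Γ.hind (Δ.InC Γ.Z) Set.univ (fun C D h => Δ.inC_congr h) ?_ Δ.C0 D
    (fun _ _ => trivial) (Δ.inC_C0 _)
  intro C C' k _ _ h3 hC
  by_cases hk : a k ⬝ᵥ Γ.r = 0
  · exact Γ.step_core hK hk hC h3
  · obtain ⟨C2, h4, h5⟩ := Γ.both hK hk C'
    exact Δ.inC_wall Γ.hind hC h3 h4 h5

include Γ hK in
theorem comm (x y : G) : Commute x y := by
  have hZ : ∀ x, x ∈ Γ.Z := by
    intro x
    have : (⊤ : Subgroup G) ≤ Γ.Z := by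
      rw [← Δ.gen, Subgroup.closure_le]
      rintro _ ⟨⟨C, x⟩, rfl⟩
      exact Γ.all_inC hK C x
    exact this trivial
  refine Δ.commute_of hK (c := Γ.t) ?_ (Γ.mem_Z.mp (hZ x)) (Γ.mem_Z.mp (hZ y))
  rcases Γ.deg_t with h | h <;> rw [h]
  · exact isCoprime_one_left
  · exact isCoprime_one_left.neg_left

end Geo
end Datum
end MF
end

section
open scoped BigOperators commutatorElement

namespace MF
variable {n : ℕ} {a : Fin n → Fin 3 → ℝ}
namespace Datum
variable {G : Type*} [Group G] (Δ : Datum a G)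

lemma exists_basis (hind : ∀ i j : Fin n, i ≠ j → LinearIndependent ℝ ![a i, a j]) :
    ∃ e : Fin n → G, Subgroup.closure (Set.range e) = ⊤ ∧
      ∀ k, ∃ ε : ℤ, (ε = 1 ∨ ε = -1) ∧ (Δ.w (e k)).toAdd = Pi.single k ε := by
  classical
  choose x x' h1 h2 h3 using fun k => exists_facet hind k Δ.R0
  refine ⟨fun k => Δ.g Δ.C0.neg (x k) (x' k), ?_, ?_⟩
  · rw [eq_top_iff, ← Δ.gen, Subgroup.closure_le]
    rintro _ ⟨⟨C, y⟩, rfl⟩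
    set Z := Subgroup.closure (Set.range (fun k => Δ.g Δ.C0.neg (x k) (x' k))) with hZ
    have : Δ.InC Z C := by
      refine walk hind (Δ.InC Z) Set.univ (fun C D h => Δ.inC_congr h) ?_ Δ.C0 C
        (fun _ _ => trivial) (Δ.inC_C0 _)
      intro C C' k _ _ h4 hC
      refine Δ.inC_step hC h4 (x := x k) (x' := x' k) (by rw [h1]; exact (h2 k).symm) (h3 k) ?_
      by_cases hk : sg C' k = sg Δ.C0 k
      · rw [Δ.g_rel C' Δ.C0 (x k) (x' k) (fun i => by
          by_cases hi : i = k
          · left; rw [hi, hk]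
          · right; exact h3 k i hi)]
        exact (Δ.inC_C0 Z).g Δ _ _
      · rw [Δ.g_rel C' Δ.C0.neg (x k) (x' k) (fun i => by
          by_cases hi : i = k
          · left; rw [hi]
            refine sg_ne hk ?_
            rw [sg_neg]
            rcases sg_cases Δ.C0 k with h | h <;> rw [h] <;> norm_num
          · right; exact h3 k i hi)]
        exact Subgroup.subset_closure ⟨k, rfl⟩
    exact this y
  · intro k
    have key := Δ.w_g Δ.C0.neg (x k) (x' k)
    refine ⟨(Δ.w (Δ.g Δ.C0.neg (x k) (x' k))).toAdd k, ?_, ?_⟩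
    · have := key k
      have h5 := h2 k
      rw [sg_neg, h1] at this
      generalize (Δ.w (Δ.g Δ.C0.neg (x k) (x' k))).toAdd k = X at *
      rcases Δ.hκ with h | h <;> rcases sg_cases Δ.C0 k with h3 | h3 <;>
        rcases sg_cases (x' k) k with h4 | h4 <;> rcases sg_cases Δ.R0 k with h5 | h5 <;>
        rw [h, h3, h4, h5] at this <;> omega
    · ext i
      by_cases hi : i = k
      · subst hi; rw [Pi.single_eq_same]
      · rw [Pi.single_eq_of_ne hi]
        have := key i
        rw [h3 k i hi, sub_self, mul_zero, mul_zero] at this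
        linarith

lemma w_bij (hind : ∀ i j : Fin n, i ≠ j → LinearIndependent ℝ ![a i, a j])
    (hcomm : ∀ x y : G, Commute x y) : Function.Bijective Δ.w := by
  classical
  let : CommGroup G := { ‹Group G› with mul_comm := fun x y => (hcomm x y).eq }
  obtain ⟨e, he, hw⟩ := Δ.exists_basis hind
  choose ε hε hw using hw
  let φ : Multiplicative (Fin n → ℤ) →* G :=
    { toFun := fun c => ∏ k, e k ^ (ε k * c.toAdd k)
      map_one' := by simp
      map_mul' := fun c c' => by
        simp [mul_add, zpow_add, Finset.prod_mul_distrib] }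
  have h1 : ∀ c, Δ.w (φ c) = c := by
    intro c
    apply Multiplicative.toAdd.injective
    have : Δ.w (φ c) = ∏ k, Δ.w (e k) ^ (ε k * c.toAdd k) := by
      simp [φ, map_prod, map_zpow]
    rw [this, toAdd_prod]
    simp only [toAdd_zpow, hw]
    ext i
    rw [Finset.sum_apply, Finset.sum_eq_single i]
    · rw [Pi.smul_apply, Pi.single_eq_same]
      rcases hε i with h | h <;> rw [h] <;> simp
    · intro k _ hk
      rw [Pi.smul_apply, Pi.single_eq_of_ne hk.symm, smul_zero]
    · simp
  have h2 : Function.Surjective φ := by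
    rw [← MonoidHom.range_eq_top, eq_top_iff, ← he, Subgroup.closure_le]
    rintro _ ⟨k, rfl⟩
    refine ⟨Multiplicative.ofAdd (Pi.single k (ε k)), ?_⟩
    show ∏ l, e l ^ (ε l * (Pi.single k (ε k) : Fin n → ℤ) l) = e k
    rw [Finset.prod_eq_single k]
    · rw [Pi.single_eq_same]
      rcases hε k with h | h <;> rw [h] <;> simp
    · intro l _ hl
      rw [Pi.single_eq_of_ne hl, mul_zero, zpow_zero]
    · simp
  constructor
  · intro x y hxy
    obtain ⟨c, rfl⟩ := h2 x
    obtain ⟨c', rfl⟩ := h2 y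
    rw [h1, h1] at hxy; rw [hxy]
  · exact fun c => ⟨φ c, h1 c⟩

/-- degree as a homomorphism -/
def degHom : G →* Multiplicative ℤ where
  toFun g := Multiplicative.ofAdd (Δ.deg g)
  map_one' := by simp [deg]
  map_mul' x y := by rw [deg_mul]; rfl

lemma mem_ker {x : G} : x ∈ Δ.degHom.ker ↔ Δ.deg x = 0 := by
  rw [MonoidHom.mem_ker]; exact Iff.rfl

/-- pass to a quotient -/
def quot (N : Subgroup G) [N.Normal] (hN : N ≤ Δ.w.ker) : Datum a (G ⧸ N) where
  γ C x := (Δ.γ C x : G ⧸ N)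
  C0 := Δ.C0
  R0 := Δ.R0
  hC0 x := by rw [Δ.hC0]; rfl
  hR0 x := by rw [Δ.hR0]; rfl
  rel C D x y h := by
    have := congrArg (QuotientGroup.mk' N) (Δ.rel C D x y h)
    simpa using this
  w := QuotientGroup.lift N Δ.w hN
  κ := Δ.κ
  hκ := Δ.hκ
  hw C x i := Δ.hw C x i
  gen := by
    have h := congrArg (Subgroup.map (QuotientGroup.mk' N)) Δ.gen
    rw [MonoidHom.map_closure, ← Set.range_comp] at h
    rw [Subgroup.map_top_of_surjective _ (QuotientGroup.mk'_surjective N)] at h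
    exact h

theorem final {p d : ℕ} (Γ : Geo p d Δ) :
    Nonempty (Additive (Abelianization Δ.degHom.ker) ≃+ (Fin (n - 1) → ℤ)) := by
  classical
  have hn : 0 < n := by rw [Γ.hn]; exact pow_pos Γ.hp.pos d
  obtain ⟨m, rfl⟩ : ∃ m, n = m + 1 := ⟨n - 1, by omega⟩
  set K := Δ.degHom.ker with hKdef
  let N : Subgroup G := ⁅K, K⁆
  have hN : N ≤ Δ.w.ker := by
    refine Subgroup.commutator_le.mpr (fun x _ y _ => ?_)
    rw [MonoidHom.mem_ker, map_commutatorElement, commutatorElement_eq_one_iff_commute]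
    exact Commute.all _ _
  let Δ' := Δ.quot N hN
  have hdeg : ∀ x : G, Δ'.deg (x : G ⧸ N) = Δ.deg x := fun x => rfl
  have hK : ∀ x y : G ⧸ N, Δ'.deg x = 0 → Δ'.deg y = 0 → Commute x y := by
    intro x y hx hy
    obtain ⟨x, rfl⟩ := QuotientGroup.mk_surjective x
    obtain ⟨y, rfl⟩ := QuotientGroup.mk_surjective y
    rw [hdeg] at hx hy
    rw [← commutatorElement_eq_one_iff_commute]
    have : ⁅x, y⁆ ∈ N := Subgroup.commutator_mem_commutator (Δ.mem_ker.mpr hx) (Δ.mem_ker.mpr hy)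
    have h2 := (QuotientGroup.eq_one_iff (N := N) _).mpr this
    exact h2
  let Γ' : Geo p d Δ' :=
    { hp := Γ.hp, hn := Γ.hn, hind := Γ.hind, j := Γ.j, R1 := Γ.R1, hR1j := Γ.hR1j, hR1 := Γ.hR1
      h0 := Γ.h0, r := Γ.r, hh0 := Γ.hh0, hr := Γ.hr, hmult := Γ.hmult, hC0 := Γ.hC0, hN := Γ.hN }
  have hbij := Δ'.w_bij Γ.hind (Γ'.comm hK)
  have hinj : ∀ x : G, Δ.w x = 1 → x ∈ N := by
    intro x hx
    have h1 : Δ'.w (x : G ⧸ N) = 1 := hx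
    rw [← map_one Δ'.w] at h1
    exact (QuotientGroup.eq_one_iff (N := N) _).mp (hbij.1 h1)
  have hsurj : ∀ c, ∃ x : G, Δ.w x = c := by
    intro c
    obtain ⟨x, hx⟩ := hbij.2 c
    obtain ⟨x, rfl⟩ := QuotientGroup.mk_surjective x
    exact ⟨x, hx⟩
  let ψ : K →* Multiplicative (Fin m → ℤ) :=
    { toFun := fun x => Multiplicative.ofAdd (fun i => (Δ.w x.1).toAdd i.castSucc)
      map_one' := by simp; rfl
      map_mul' := fun x y => by simp; rfl }
  have hψs : Function.Surjective ψ := by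
    intro c
    obtain ⟨x, hx⟩ := hsurj (Multiplicative.ofAdd
      (Fin.snoc (α := fun _ => ℤ) c.toAdd (-∑ i, c.toAdd i)))
    refine ⟨⟨x, ?_⟩, ?_⟩
    · rw [hKdef, mem_ker, deg, hx, Fin.sum_univ_castSucc]
      simp
    · apply Multiplicative.toAdd.injective
      ext i
      show (Δ.w x).toAdd i.castSucc = _
      rw [hx]; simp
  have hψk : ψ.ker = commutator K := by
    ext x
    rw [MonoidHom.mem_ker]
    constructor
    · intro h
      have h1 : ∀ i : Fin m, (Δ.w x.1).toAdd i.castSucc = 0 := fun i =>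
        congrFun (congrArg Multiplicative.toAdd h) i
      have h2 : Δ.deg x.1 = 0 := Δ.mem_ker.mp x.2
      have h3 : Δ.w x.1 = 1 := by
        apply Multiplicative.toAdd.injective
        ext i
        rw [deg, Fin.sum_univ_castSucc] at h2
        simp only [h1, Finset.sum_const_zero, zero_add] at h2
        refine Fin.lastCases ?_ ?_ i
        · rw [h2]; rfl
        · intro i; rw [h1]; rfl
      have h4 := hinj _ h3
      have h5 : Subgroup.map K.subtype (commutator K) = N := by
        rw [commutator_def, Subgroup.map_commutator]
        simp [N, ← MonoidHom.range_eq_map]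
      rw [← h5] at h4
      obtain ⟨y, hy, hyx⟩ := h4
      have : y = x := Subtype.ext hyx
      rwa [← this]
    · intro h
      exact Abelianization.commutator_subset_ker ψ h
  have e1 : Abelianization K ≃* Multiplicative (Fin m → ℤ) :=
    (QuotientGroup.quotientMulEquivOfEq hψk.symm).trans
      (QuotientGroup.quotientKerEquivOfSurjective ψ hψs)
  exact ⟨(MulEquiv.toAdditive e1)⟩

end Datum
end MF
end

section
open CategoryTheory unitInterval

namespace MF

/-- continuous logarithm on the square -/
lemma exists_log_sq (g : I × I → ℂ) (hg : Continuous g) (h0 : ∀ s, g s ≠ 0) :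
    ∃ L : I × I → ℂ, Continuous L ∧ ∀ s, Complex.exp (L s) = g s := by
  let g' : ℝ × ℝ → ℂ := fun s => g (Set.projIcc 0 1 zero_le_one s.1, Set.projIcc 0 1 zero_le_one s.2)
  have hg' : Continuous g' := by
    refine hg.comp ?_
    exact (continuous_projIcc.comp continuous_fst).prodMk (continuous_projIcc.comp continuous_snd)
  have hsc : IsSimplyConnected (Set.univ : Set (ℝ × ℝ)) := by
    have : ContractibleSpace (Set.univ : Set (ℝ × ℝ)) :=
      (convex_univ).contractibleSpace ⟨0, trivial⟩
    unfold IsSimplyConnected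
    infer_instance
  obtain ⟨f, hf, hf2⟩ := Complex.exists_continuousOn_eqOn_exp_comp hsc isOpen_univ
    hg'.continuousOn (by rintro ⟨x, -, hx⟩; exact h0 _ hx)
  refine ⟨fun s => f (s.1, s.2), ?_, ?_⟩
  · exact (continuousOn_univ.mp hf).comp (by fun_prop)
  · intro s
    have := hf2 (Set.mem_univ ((s.1 : ℝ), (s.2 : ℝ)))
    simp only [Function.comp] at this
    rw [this]
    simp [g']

lemma exists_log (g : I → ℂ) (hg : Continuous g) (h0 : ∀ s, g s ≠ 0) :
    ∃ L : I → ℂ, Continuous L ∧ ∀ s, Complex.exp (L s) = g s := by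
  obtain ⟨L, hL, hL2⟩ := exists_log_sq (fun s => g s.1) (hg.comp continuous_fst) (fun s => h0 _)
  exact ⟨fun s => L (s, 0), hL.comp (by fun_prop), fun s => hL2 _⟩

/-- two continuous functions on a connected space with equal exponential differ by a constant -/
lemma log_unique {A : Type*} [TopologicalSpace A] [PreconnectedSpace A] (L L' : A → ℂ)
    (hL : Continuous L) (hL' : Continuous L')
    (h : ∀ s, Complex.exp (L s) = Complex.exp (L' s)) (s t : A) :
    L s - L t = L' s - L' t := by
  have key : ∀ s, ∃ k : ℤ, L s - L' s = k * (2 * Real.pi * Complex.I) := by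
    intro s
    obtain ⟨k, hk⟩ := Complex.exp_eq_exp_iff_exists_int.mp (h s)
    exact ⟨k, by rw [hk]; ring⟩
  choose k hk using key
  have hne : (2 * Real.pi * Complex.I : ℂ) ≠ 0 := Complex.two_pi_I_ne_zero
  have hc : Continuous (fun s => ((k s : ℤ) : ℂ)) := by
    have : (fun s => ((k s : ℤ) : ℂ)) = fun s => (L s - L' s) / (2 * Real.pi * Complex.I) := by
      funext s; rw [hk]; field_simp
    rw [this]; fun_prop
  have hc2 : Continuous k := by
    have he : Topology.IsClosedEmbedding ((↑) : ℤ → ℂ) := Complex.isClosedEmbedding_intCast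
    exact he.isEmbedding.isInducing.continuous_iff.mpr hc
  have : k s = k t := PreconnectedSpace.constant inferInstance hc2
  have h1 := hk s
  have h2 := hk t
  rw [this] at h1
  linear_combination h1 - h2

variable {X : Type*} [TopologicalSpace X]

/-- log-integral of a nowhere zero function along a path -/
noncomputable def wnd (f : C(X, ℂ)) (hf : ∀ x, f x ≠ 0) {x y : X} (p : Path x y) : ℂ :=
  let L := (exists_log (fun t => f (p t)) (by fun_prop) (fun _ => hf _)).choose
  L 1 - L 0

lemma wnd_eq (f : C(X, ℂ)) (hf : ∀ x, f x ≠ 0) {x y : X} (p : Path x y)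
    (L : I → ℂ) (hL : Continuous L) (h : ∀ t, Complex.exp (L t) = f (p t)) :
    wnd f hf p = L 1 - L 0 := by
  have hs := (exists_log (fun t => f (p t)) (by fun_prop) (fun _ => hf _)).choose_spec
  exact log_unique _ _ hs.1 hL (fun s => by rw [hs.2, h]) 1 0

lemma exists_wnd (f : C(X, ℂ)) (hf : ∀ x, f x ≠ 0) {x y : X} (p : Path x y) (c : ℂ)
    (hc : Complex.exp c = f x) :
    ∃ L : I → ℂ, Continuous L ∧ (∀ t, Complex.exp (L t) = f (p t)) ∧ L 0 = c ∧
      L 1 = c + wnd f hf p := by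
  obtain ⟨L, h1, h2⟩ := exists_log (fun t => f (p t)) (by fun_prop) (fun _ => hf _)
  have h3 := wnd_eq f hf p L h1 h2
  refine ⟨fun t => L t - L 0 + c, by fun_prop, ?_, by ring, by rw [h3]; ring⟩
  intro t
  have := h2 0
  simp only [Path.source] at this
  rw [Complex.exp_add, Complex.exp_sub, h2, this, hc]
  field_simp [hf x]

lemma wnd_exp (f : C(X, ℂ)) (hf : ∀ x, f x ≠ 0) {x y : X} (p : Path x y) :
    Complex.exp (wnd f hf p) * f x = f y := by
  obtain ⟨L, h1, h2, h3, h4⟩ := exists_wnd f hf p (Complex.log (f x)) (Complex.exp_log (hf x))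
  have := h2 1
  rw [h4, Complex.exp_add, Complex.exp_log (hf x)] at this
  simp at this
  rw [← this]; ring

lemma wnd_homotopic (f : C(X, ℂ)) (hf : ∀ x, f x ≠ 0) {x y : X} (p q : Path x y)
    (h : p.Homotopic q) : wnd f hf p = wnd f hf q := by
  obtain ⟨H⟩ := h
  obtain ⟨L, hL, hL2⟩ := exists_log_sq (fun s => f (H s)) (by fun_prop) (fun _ => hf _)
  rw [wnd_eq f hf p (fun t => L (0, t)) (by fun_prop) (fun t => by rw [hL2]; simp),
    wnd_eq f hf q (fun t => L (1, t)) (by fun_prop) (fun t => by rw [hL2]; simp)]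
  have h1 := log_unique (fun s : I => L (s, 1)) (fun s => L (0, 1)) (by fun_prop) (by fun_prop)
    (fun s => by rw [hL2, hL2]; simp) 0 1
  have h0 := log_unique (fun s : I => L (s, 0)) (fun s => L (0, 0)) (by fun_prop) (by fun_prop)
    (fun s => by rw [hL2, hL2]; simp) 0 1
  linear_combination h1 - h0

lemma wnd_trans (f : C(X, ℂ)) (hf : ∀ x, f x ≠ 0) {x y z : X} (p : Path x y) (q : Path y z) :
    wnd f hf (p.trans q) = wnd f hf p + wnd f hf q := by
  obtain ⟨L, h1, h2, h3, h4⟩ := exists_wnd f hf p (Complex.log (f x)) (Complex.exp_log (hf x))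
  obtain ⟨L', h1', h2', h3', h4'⟩ := exists_wnd f hf q (Complex.log (f x) + wnd f hf p)
    (by rw [← wnd_exp f hf p, Complex.exp_add, Complex.exp_log (hf x)]; ring)
  let P : Path (Complex.log (f x)) (Complex.log (f x) + wnd f hf p) := ⟨⟨L, h1⟩, h3, h4⟩
  let Q : Path (Complex.log (f x) + wnd f hf p)
    (Complex.log (f x) + wnd f hf p + wnd f hf q) := ⟨⟨L', h1'⟩, h3', h4'⟩
  rw [wnd_eq f hf _ (P.trans Q) (by fun_prop)]
  · simp
    ring
  · intro t
    rw [Path.trans_apply, Path.trans_apply]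
    split_ifs
    · exact h2 _
    · exact h2' _

lemma wnd_prod {ι : Type*} [Fintype ι] (f : ι → C(X, ℂ)) (hf : ∀ i x, f i x ≠ 0)
    (g : C(X, ℂ)) (hg : ∀ x, g x ≠ 0) (h : ∀ x, g x = ∏ i, f i x) {x y : X} (p : Path x y) :
    wnd g hg p = ∑ i, wnd (f i) (hf i) p := by
  have := fun i => exists_wnd (f i) (hf i) p (Complex.log (f i x)) (Complex.exp_log (hf i x))
  choose L h1 h2 h3 h4 using this
  rw [wnd_eq g hg p (fun t => ∑ i, L i t) (by fun_prop)]
  · rw [← Finset.sum_sub_distrib]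
    refine Finset.sum_congr rfl fun i _ => ?_
    rw [h4, h3]; ring
  · intro t
    rw [Complex.exp_sum, h]
    exact Finset.prod_congr rfl fun i _ => h2 i t

/-- winding on morphisms of the fundamental groupoid -/
noncomputable def wq (f : C(X, ℂ)) (hf : ∀ x, f x ≠ 0) {x y : FundamentalGroupoid X}
    (p : x ⟶ y) : ℂ :=
  Quotient.lift (fun q : Path x.as y.as => wnd f hf q) (fun _ _ h => wnd_homotopic f hf _ _ h) p

/-- the class of a path -/
def cl {x y : X} (p : Path x y) : FundamentalGroupoid.mk x ⟶ FundamentalGroupoid.mk y :=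
  Path.Homotopic.Quotient.mk p

lemma exists_cl {x y : X} (p : FundamentalGroupoid.mk x ⟶ FundamentalGroupoid.mk y) :
    ∃ q : Path x y, p = cl q := by
  obtain ⟨q, hq⟩ := Quotient.exists_rep p
  exact ⟨q, hq.symm⟩

lemma cl_eq {x y : X} (p q : Path x y) : cl p = cl q ↔ p.Homotopic q :=
  ⟨fun h => Quotient.exact h, fun h => Quotient.sound h⟩

lemma cl_trans {x y z : X} (p : Path x y) (q : Path y z) : cl (p.trans q) = cl p ≫ cl q := rfl
lemma cl_refl (x : X) : cl (Path.refl x) = 𝟙 _ := rfl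
lemma wq_cl (f : C(X, ℂ)) (hf : ∀ x, f x ≠ 0) {x y : X} (p : Path x y) :
    wq f hf (cl p) = wnd f hf p := rfl

lemma wq_comp (f : C(X, ℂ)) (hf : ∀ x, f x ≠ 0) {x y z : X}
    (p : FundamentalGroupoid.mk x ⟶ FundamentalGroupoid.mk y)
    (q : FundamentalGroupoid.mk y ⟶ FundamentalGroupoid.mk z) :
    wq f hf (p ≫ q) = wq f hf p + wq f hf q := by
  obtain ⟨p, rfl⟩ := exists_cl p
  obtain ⟨q, rfl⟩ := exists_cl q
  rw [← cl_trans, wq_cl, wq_cl, wq_cl, wnd_trans]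

lemma wq_id (f : C(X, ℂ)) (hf : ∀ x, f x ≠ 0) (x : X) :
    wq f hf (𝟙 (FundamentalGroupoid.mk x)) = 0 := by
  have := wq_comp f hf (𝟙 (FundamentalGroupoid.mk x)) (𝟙 (FundamentalGroupoid.mk x))
  rw [Category.comp_id] at this
  linear_combination -this

lemma exists_int (f : C(X, ℂ)) (hf : ∀ x, f x ≠ 0) {x : X} (p : FundamentalGroup X x) :
    ∃ k : ℤ, wq f hf p = k * (2 * Real.pi * Complex.I) := by
  obtain ⟨q, hq⟩ := exists_cl (x := x) (y := x) p
  rw [← Complex.exp_eq_one_iff, hq, wq_cl]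
  have := wnd_exp f hf q
  exact mul_right_cancel₀ (hf x) (by rw [this, one_mul])

/-- integral winding number homomorphism -/
noncomputable def wi (f : C(X, ℂ)) (hf : ∀ x, f x ≠ 0) (x : X) :
    FundamentalGroup X x →* Multiplicative ℤ where
  toFun p := Multiplicative.ofAdd (exists_int f hf p).choose
  map_one' := by
    have h := (exists_int f hf (1 : FundamentalGroup X x)).choose_spec
    have h2 : wq f hf (1 : FundamentalGroup X x) = 0 := wq_id f hf x
    replace h := h2.symm.trans h
    have hne : (2 * Real.pi * Complex.I : ℂ) ≠ 0 := Complex.two_pi_I_ne_zero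
    have h3 : (((exists_int f hf (1 : FundamentalGroup X x)).choose : ℤ) : ℂ) = 0 := by
      rcases mul_eq_zero.mp h.symm with h | h
      · exact h
      · exact absurd h hne
    rw [← ofAdd_zero]
    congr 1
    exact_mod_cast h3
  map_mul' p q := by
    have h := (exists_int f hf (p * q)).choose_spec
    have h1 := (exists_int f hf p).choose_spec
    have h2 := (exists_int f hf q).choose_spec
    have h3 : wq f hf (p * q) = wq f hf q + wq f hf p := wq_comp f hf (x := x) (y := x) (z := x) q p
    have hne : (2 * Real.pi * Complex.I : ℂ) ≠ 0 := Complex.two_pi_I_ne_zero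
    replace h := h3.symm.trans h
    rw [← ofAdd_add]
    congr 1
    have : (((exists_int f hf (p * q)).choose : ℤ) : ℂ) =
       ((exists_int f hf p).choose : ℤ) + ((exists_int f hf q).choose : ℤ) := by
      apply mul_right_cancel₀ hne
      rw [← h, add_mul, ← h1, ← h2]; ring
    exact_mod_cast this

lemma wi_spec (f : C(X, ℂ)) (hf : ∀ x, f x ≠ 0) {x : X} (p : FundamentalGroup X x) :
    wq f hf p = ((wi f hf x p).toAdd : ℂ) * (2 * Real.pi * Complex.I) :=
  (exists_int f hf p).choose_spec

end MF
end

section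
open CategoryTheory unitInterval
open scoped BigOperators

namespace MF

/-- the linear forms -/
noncomputable def lf {n : ℕ} (a : Fin n → Fin 3 → ℝ) (i : Fin n) (z : Fin 3 → ℂ) : ℂ :=
  ∑ k, (a i k : ℂ) * z k

/-- the complement of the arrangement -/
def XX {n : ℕ} (a : Fin n → Fin 3 → ℝ) : Set (Fin 3 → ℂ) := {z | ∀ i, lf a i z ≠ 0}

/-- the Milnor fiber -/
def FF {n : ℕ} (a : Fin n → Fin 3 → ℝ) : Set (Fin 3 → ℂ) := {z | ∏ i, lf a i z = 1}

variable {n : ℕ} {a : Fin n → Fin 3 → ℝ}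

lemma continuous_lf (i : Fin n) : Continuous (lf a i) := by
  unfold lf; fun_prop

lemma lf_smul (i : Fin n) (c : ℂ) (z : Fin 3 → ℂ) : lf a i (c • z) = c * lf a i z := by
  unfold lf
  rw [Finset.mul_sum]
  refine Finset.sum_congr rfl fun k _ => ?_
  simp; ring

lemma lf_add (i : Fin n) (y z : Fin 3 → ℂ) : lf a i (y + z) = lf a i y + lf a i z := by
  unfold lf
  rw [← Finset.sum_add_distrib]
  refine Finset.sum_congr rfl fun k _ => ?_
  simp; ring

/-- linear forms on the complement -/
noncomputable def fi (a : Fin n → Fin 3 → ℝ) (i : Fin n) : C(XX a, ℂ) :=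
  ⟨fun z => lf a i z, (continuous_lf i).comp continuous_subtype_val⟩

lemma fi_ne (i : Fin n) (z : XX a) : fi a i z ≠ 0 := z.2 i

/-- product of the linear forms -/
noncomputable def fp (a : Fin n → Fin 3 → ℝ) : C(XX a, ℂ) :=
  ⟨fun z => ∏ i, lf a i z, continuous_finsetProd _ fun i _ =>
    (continuous_lf i).comp continuous_subtype_val⟩

lemma fp_ne (z : XX a) : fp a z ≠ 0 := by
  show ∏ i, lf a i z.1 ≠ 0
  exact Finset.prod_ne_zero_iff.mpr fun i _ => z.2 i

lemma prod_smul' (c : ℂ) (z : Fin 3 → ℂ) :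
    ∏ i, lf a i (c • z) = c ^ n * ∏ i, lf a i z := by
  simp only [lf_smul]
  rw [Finset.prod_mul_distrib]; simp

/-- inclusion of the Milnor fiber in the complement -/
def inc (a : Fin n → Fin 3 → ℝ) : C(FF a, XX a) :=
  ⟨fun z => ⟨z.1, fun i h => by
    have h1 : ∏ i, lf a i z.1 = 1 := z.2
    rw [Finset.prod_eq_zero (Finset.mem_univ i) h] at h1
    exact zero_ne_one h1⟩, by fun_prop⟩

lemma inc_val (z : FF a) : (inc a z).1 = z.1 := rfl

lemma fp_inc (z : FF a) : fp a (inc a z) = 1 := z.2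

lemma exp_pow (hn : n ≠ 0) (L : ℂ) : Complex.exp (-L / n) ^ n = Complex.exp (-L) := by
  rw [← Complex.exp_nat_mul]
  congr 1
  have : (n : ℂ) ≠ 0 := by exact_mod_cast hn
  field_simp

lemma scale_mem (hn : n ≠ 0) (L : ℂ) (z : XX a) (h : Complex.exp L = fp a z) :
    Complex.exp (-L / n) • z.1 ∈ FF a := by
  have h' : Complex.exp L = ∏ i, lf a i z.1 := h
  show ∏ i, lf a i _ = 1
  rw [prod_smul', exp_pow hn, ← h', ← Complex.exp_add]
  simp

lemma scale_memX (c : ℂ) (z : XX a) : Complex.exp c • z.1 ∈ XX a := fun i => by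
  rw [lf_smul]
  exact mul_ne_zero (Complex.exp_ne_zero _) (z.2 i)

lemma surj_aux (hn : n ≠ 0) (z₀ : FF a) (p : Path (inc a z₀) (inc a z₀))
    (h : wnd (fp a) fp_ne p = 0) :
    ∃ q : Path z₀ z₀, (q.map (inc a).continuous).Homotopic p := by
  obtain ⟨L, h1, h2, h3, h4⟩ := exists_wnd (fp a) fp_ne p 0 (by rw [fp_inc]; simp)
  rw [h, add_zero] at h4
  let q : Path z₀ z₀ :=
    { toFun := fun t => ⟨Complex.exp (-(L t) / n) • (p t).1, scale_mem hn _ _ (h2 t)⟩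
      continuous_toFun := by fun_prop
      source' := by ext; simp [h3, inc_val]
      target' := by ext; simp [h4, inc_val] }
  refine ⟨q, ⟨?_⟩⟩
  exact
    { toFun := fun s => ⟨Complex.exp ((((s.1 : ℝ) : ℂ) - 1) * (L s.2 / n)) • (p s.2).1, scale_memX _ _⟩
      continuous_toFun := by fun_prop
      map_zero_left := fun t => by
        apply Subtype.ext
        show Complex.exp _ • _ = Complex.exp (-(L t) / n) • (p t).1
        congr 2
        simp; ring
      map_one_left := fun t => by
        apply Subtype.ext
        simp
      prop' := by
        intro t x hx
        apply Subtype.ext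
        rcases hx with rfl | hx
        · show Complex.exp _ • _ = Complex.exp (-(L 0) / n) • (p 0).1
          simp [h3]
        · rw [Set.mem_singleton_iff] at hx
          subst hx
          show Complex.exp _ • _ = Complex.exp (-(L 1) / n) • (p 1).1
          simp [h4] }

lemma inj_aux (hn : n ≠ 0) (z₀ : FF a) (p q : Path z₀ z₀)
    (h : (p.map (inc a).continuous).Homotopic (q.map (inc a).continuous)) : p.Homotopic q := by
  obtain ⟨H⟩ := h
  obtain ⟨L₀, hL₀, hL₀2⟩ := exists_log_sq (fun s => fp a (H s)) (by fun_prop) (fun _ => fp_ne _)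
  obtain ⟨L, hL, hL2, hL00⟩ : ∃ L : I × I → ℂ, Continuous L ∧
      (∀ s, Complex.exp (L s) = fp a (H s)) ∧ L (0, 0) = 0 := by
    refine ⟨fun s => L₀ s - L₀ (0, 0), by fun_prop, fun s => ?_, sub_self _⟩
    rw [Complex.exp_sub, hL₀2, hL₀2]
    simp [fp_inc]
  have e1 : ∀ t, L (0, t) = 0 := fun t => by
    have := log_unique (fun t : I => L (0, t)) (fun _ => 0) (by fun_prop) (by fun_prop)
      (fun s => by rw [hL2]; simp [fp_inc]) t 0
    linear_combination this + hL00
  have e2 : ∀ s, L (s, 0) = 0 := fun s => by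
    have := log_unique (fun t : I => L (t, 0)) (fun _ => 0) (by fun_prop) (by fun_prop)
      (fun s => by rw [hL2]; simp [fp_inc]) s 0
    linear_combination this + hL00
  have e3 : ∀ s, L (s, 1) = 0 := fun s => by
    have := log_unique (fun t : I => L (t, 1)) (fun _ => 0) (by fun_prop) (by fun_prop)
      (fun s => by rw [hL2]; simp [fp_inc]) s 0
    linear_combination this + e1 1
  have e4 : ∀ t, L (1, t) = 0 := fun t => by
    have := log_unique (fun t : I => L (1, t)) (fun _ => 0) (by fun_prop) (by fun_prop)
      (fun s => by rw [hL2]; simp [fp_inc]) t 0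
    linear_combination this + e2 1
  exact ⟨
    { toFun := fun s => ⟨Complex.exp (-(L s) / n) • (H s).1, scale_mem hn _ _ (hL2 s)⟩
      continuous_toFun := by fun_prop
      map_zero_left := fun t => by
        apply Subtype.ext
        simp [e1, inc_val]
      map_one_left := fun t => by
        apply Subtype.ext
        simp [e4, inc_val]
      prop' := by
        intro t x hx
        apply Subtype.ext
        rcases hx with rfl | hx
        · simp [e2, inc_val]
        · rw [Set.mem_singleton_iff] at hx
          subst hx
          simp [e3, inc_val] }⟩

lemma map_cl (z₀ : FF a) (q : Path z₀ z₀) :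
    FundamentalGroup.map (inc a) z₀ (cl q) = cl (q.map (inc a).continuous) := rfl

lemma map_inj (hn : n ≠ 0) (z₀ : FF a) : Function.Injective (FundamentalGroup.map (inc a) z₀) := by
  intro p q h
  obtain ⟨p, rfl⟩ := exists_cl (x := z₀) (y := z₀) p
  obtain ⟨q, rfl⟩ := exists_cl (x := z₀) (y := z₀) q
  rw [map_cl, map_cl, cl_eq] at h
  exact (cl_eq _ _).mpr (inj_aux hn z₀ p q h)

lemma map_range (hn : n ≠ 0) (z₀ : FF a) (g : FundamentalGroup (XX a) (inc a z₀)) :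
    g ∈ (FundamentalGroup.map (inc a) z₀).range ↔ wq (fp a) fp_ne g = 0 := by
  constructor
  · rintro ⟨p, rfl⟩
    obtain ⟨p, rfl⟩ := exists_cl (x := z₀) (y := z₀) p
    rw [map_cl, wq_cl, wnd_eq _ _ _ (fun _ => 0) (by fun_prop)]
    · simp
    · intro t
      simp [fp_inc]
  · intro h
    obtain ⟨p, rfl⟩ := exists_cl (x := inc a z₀) (y := inc a z₀) g
    obtain ⟨q, hq⟩ := surj_aux hn z₀ p h
    exact ⟨cl q, by rw [map_cl]; exact (cl_eq _ _).mpr hq⟩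

/-- change of base point -/
lemma equiv_ker (hn : n ≠ 0) (z₀ : FF a) (b : XX a) (c : Path (inc a z₀) b) :
    ∃ f : FundamentalGroup (FF a) z₀ →* FundamentalGroup (XX a) b, Function.Injective f ∧
      ∀ g, g ∈ f.range ↔ wq (fp a) fp_ne g = 0 := by
  refine ⟨(FundamentalGroup.fundamentalGroupMulEquivOfPath c).toMonoidHom.comp
    (FundamentalGroup.map (inc a) z₀), ?_, ?_⟩
  · exact (FundamentalGroup.fundamentalGroupMulEquivOfPath c).injective.comp (map_inj hn z₀)
  · intro g
    have key : ∀ g' : FundamentalGroup (XX a) (inc a z₀),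
        wq (fp a) fp_ne (FundamentalGroup.fundamentalGroupMulEquivOfPath c g') =
        wq (fp a) fp_ne g' := by
      intro g'
      have : FundamentalGroup.fundamentalGroupMulEquivOfPath c g' =
        ((cl c.symm ≫ g' ≫ cl c :
          FundamentalGroupoid.mk b ⟶ FundamentalGroupoid.mk b)) := rfl
      rw [this, wq_comp, wq_comp]
      have h2 : wq (fp a) fp_ne (cl c.symm ≫ cl c) = 0 := by
        rw [← wq_id (fp a) fp_ne b]
        congr 1
        exact (cl_eq _ _).mpr ⟨(Path.Homotopy.reflSymmTrans c).symm⟩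
      rw [wq_comp] at h2
      linear_combination h2
    constructor
    · rintro ⟨p, rfl⟩
      have := (map_range hn z₀ _).mp ⟨p, rfl⟩
      rw [← this]
      exact key _
    · intro h
      obtain ⟨g', rfl⟩ := (FundamentalGroup.fundamentalGroupMulEquivOfPath c).surjective g
      rw [key] at h
      obtain ⟨p, rfl⟩ := (map_range hn z₀ g').mpr h
      exact ⟨p, rfl⟩

end MF
end

section
open CategoryTheory unitInterval
open scoped BigOperators

namespace MF

/-- a cover by simply connected open sets with common points -/
structure Cov (X K R : Type*) [TopologicalSpace X] where
  U : K → Set X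
  ho : ∀ k, IsOpen (U k)
  hj : ∀ k u v, u ∈ U k → v ∈ U k → JoinedIn (U k) u v
  hh : ∀ k u v (p q : Path u v), (∀ t, p t ∈ U k) → (∀ t, q t ∈ U k) → p.Homotopic q
  r : R → X
  hr : ∀ k x, r x ∈ U k
  hcov : ∀ z, ∃ k, z ∈ U k
  hmeet : ∀ k l z, z ∈ U k → z ∈ U l → ∃ x, JoinedIn (U k ∩ U l) z (r x)

namespace Cov
variable {X K R : Type*} [TopologicalSpace X] (V : Cov X K R)

/-- the canonical class inside an open set of the cover -/
noncomputable def e (k : K) {u v : X} (hu : u ∈ V.U k) (hv : v ∈ V.U k) :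
    FundamentalGroupoid.mk u ⟶ FundamentalGroupoid.mk v :=
  cl (V.hj k u v hu hv).somePath

lemma e_eq (k : K) {u v : X} (hu : u ∈ V.U k) (hv : v ∈ V.U k) (p : Path u v)
    (hp : ∀ t, p t ∈ V.U k) : V.e k hu hv = cl p :=
  (cl_eq _ _).mpr (V.hh k u v _ _ (V.hj k u v hu hv).somePath_mem hp)

lemma e_comp (k : K) {u v w : X} (hu : u ∈ V.U k) (hv : v ∈ V.U k) (hw : w ∈ V.U k) :
    V.e k hu hv ≫ V.e k hv hw = V.e k hu hw := by
  rw [V.e_eq k hu hw ((V.hj k u v hu hv).somePath.trans (V.hj k v w hv hw).somePath)]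
  · rfl
  · intro t
    rw [Path.trans_apply]
    split_ifs <;> exact JoinedIn.somePath_mem _ _

lemma e_self (k : K) {u : X} (hu : u ∈ V.U k) : V.e k hu hu = 𝟙 _ := by
  rw [V.e_eq k hu hu (Path.refl u) (fun t => hu)]; rfl

lemma e_inter (k l : K) {u v : X} (h : JoinedIn (V.U k ∩ V.U l) u v) :
    V.e k h.source_mem.1 h.target_mem.1 = V.e l h.source_mem.2 h.target_mem.2 := by
  rw [V.e_eq k _ _ h.somePath (fun t => (h.somePath_mem t).1),
    V.e_eq l _ _ h.somePath (fun t => (h.somePath_mem t).2)]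

/-- edges -/
noncomputable def T (k : K) (x y : R) :
    FundamentalGroupoid.mk (V.r x) ⟶ FundamentalGroupoid.mk (V.r y) := V.e k (V.hr k x) (V.hr k y)

lemma T_comp (k : K) (x y z : R) : V.T k x y ≫ V.T k y z = V.T k x z := V.e_comp k _ _ _
lemma T_self (k : K) (x : R) : V.T k x x = 𝟙 _ := V.e_self k _

lemma T_comp' (k : K) (x y : R) : V.T k x y ≫ V.T k y x = 𝟙 _ := by
  rw [T_comp, T_self]

/-- loops -/
noncomputable def γ (k0 : K) (b : R) (k : K) (x : R) : FundamentalGroup X (V.r b) :=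
  V.T k0 b x ≫ V.T k x b

lemma γ_mul (k0 : K) (b : R) (k l : K) (x : R) :
    V.γ k0 b k x * (V.γ k0 b l x)⁻¹ = (V.T l b x ≫ V.T k x b : _ ⟶ _) := by
  rw [mul_inv_eq_iff_eq_mul]
  show V.T k0 b x ≫ V.T k x b = (V.T k0 b x ≫ V.T l x b) ≫ (V.T l b x ≫ V.T k x b)
  rw [Category.assoc, ← Category.assoc (V.T l x b), T_comp', Category.id_comp]

lemma γ_rel (k0 : K) (b : R) (k l : K) (x y : R) (h : JoinedIn (V.U k ∩ V.U l) (V.r x) (V.r y)) :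
    V.γ k0 b k x * (V.γ k0 b l x)⁻¹ = V.γ k0 b k y * (V.γ k0 b l y)⁻¹ := by
  rw [γ_mul, γ_mul]
  have : V.T k x y = V.T l x y := V.e_inter k l h
  rw [← V.T_comp k x y b, this, ← V.T_comp l b x y]
  simp only [Category.assoc]

/-- the subgroup generated by the loops -/
noncomputable def E (k0 : K) (b : R) : Subgroup (FundamentalGroup X (V.r b)) :=
  Subgroup.closure (Set.range (fun q : K × R => V.γ k0 b q.1 q.2))

lemma mem_E (k0 : K) (b : R) (k l : K) (x : R) :
    (show FundamentalGroup X (V.r b) from V.T l b x ≫ V.T k x b) ∈ V.E k0 b := by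
  rw [← V.γ_mul k0 b k l x]
  exact mul_mem (Subgroup.subset_closure ⟨(k, x), rfl⟩)
    (inv_mem (Subgroup.subset_closure ⟨(l, x), rfl⟩))

lemma mem_E2 (k0 : K) (b : R) (k l : K) (z : X) (hk : z ∈ V.U k) (hl : z ∈ V.U l) :
    (show FundamentalGroup X (V.r b) from V.e k (V.hr k b) hk ≫ V.e l hl (V.hr l b)) ∈ V.E k0 b := by
  obtain ⟨x, hx⟩ := V.hmeet k l z hk hl
  have h1 := V.mem_E k0 b l k x
  have h2 := V.e_inter k l hx
  have : V.e k (V.hr k b) hk ≫ V.e l hl (V.hr l b) = V.T k b x ≫ V.T l x b := by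
    unfold T
    rw [← V.e_comp k (V.hr k b) hk (V.hr k x), h2, Category.assoc, e_comp]
  rw [this]; exact h1

lemma gen_aux (k0 : K) (b : R) (c : Path (V.r b) (V.r b)) (s : I) :
    ∀ k (hk : c s ∈ V.U k), (show FundamentalGroup X (V.r b) from
      (cl ((c.subpath 0 s).cast c.source.symm rfl) ≫ V.e k hk (V.hr k b))) ∈ V.E k0 b := by
  set Q : I → Prop := fun s => ∀ k (hk : c s ∈ V.U k), (show FundamentalGroup X (V.r b) from
      (cl ((c.subpath 0 s).cast c.source.symm rfl) ≫ V.e k hk (V.hr k b))) ∈ V.E k0 b with hQ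
  -- changing the open set
  have hch : ∀ s k l (hk : c s ∈ V.U k) (hl : c s ∈ V.U l),
      (show FundamentalGroup X (V.r b) from
      (cl ((c.subpath 0 s).cast c.source.symm rfl) ≫ V.e k hk (V.hr k b))) ∈ V.E k0 b →
      (show FundamentalGroup X (V.r b) from
      (cl ((c.subpath 0 s).cast c.source.symm rfl) ≫ V.e l hl (V.hr l b))) ∈ V.E k0 b := by
    intro s k l hk hl h
    have h2 := mul_mem (V.mem_E2 k0 b k l (c s) hk hl) h
    have : (cl ((c.subpath 0 s).cast c.source.symm rfl) ≫ V.e l hl (V.hr l b)) =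
      (cl ((c.subpath 0 s).cast c.source.symm rfl) ≫ V.e k hk (V.hr k b)) ≫
        (V.e k (V.hr k b) hk ≫ V.e l hl (V.hr l b)) := by
      have h3 := V.e_comp k hk (V.hr k b) hk
      rw [V.e_self] at h3
      rw [Category.assoc, ← Category.assoc (V.e k hk _), h3, Category.id_comp]
    rw [this]
    exact h2
  -- moving along
  have hmv : ∀ s t k, (∀ u ∈ Set.uIcc s t, c u ∈ V.U k) → Q s → Q t := by
    intro s t k hst hs l hl
    have hks := hst s Set.left_mem_uIcc
    have hkt := hst t Set.right_mem_uIcc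
    refine hch t k l hkt hl ?_
    have h1 := hs k hks
    have h2 : V.e k hks (V.hr k b) = cl (c.subpath s t) ≫ V.e k hkt (V.hr k b) := by
      rw [← V.e_eq k hks hkt (c.subpath s t), V.e_comp]
      intro u
      have : c.subpath s t u ∈ Set.range (c.subpath s t) := ⟨u, rfl⟩
      rw [Path.range_subpath] at this
      obtain ⟨u', hu', h⟩ := this
      rw [← h]; exact hst u' hu'
    have h3 : cl ((c.subpath 0 s).cast c.source.symm rfl) ≫ cl (c.subpath s t) =
        cl ((c.subpath 0 t).cast c.source.symm rfl) := by
      rw [← cl_trans, cl_eq]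
      exact ⟨((Path.Homotopy.subpathTransSubpath c 0 s t)).cast
        (by ext u; rfl) (by ext u; rfl)⟩
    rw [h2, ← Category.assoc, h3] at h1
    exact h1
  have h0 : Q 0 := by
    intro k hk
    have h1 : V.e k hk (V.hr k b) = cl ((Path.refl (V.r b)).cast c.source rfl) :=
      V.e_eq k _ _ _ (fun t => V.hr k b)
    have h2 : cl ((c.subpath 0 0).cast c.source.symm rfl) ≫ V.e k hk (V.hr k b) = 𝟙 _ := by
      rw [h1, ← cl_trans, ← cl_refl, cl_eq]
      have : (((c.subpath 0 0).cast c.source.symm rfl).trans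
        ((Path.refl (V.r b)).cast c.source rfl)) = Path.refl (V.r b) := by
        ext t
        rw [Path.trans_apply]
        split_ifs <;> simp
      rw [this]
    rw [h2]
    exact one_mem _
  have hc : ∀ s t : I, Q s ↔ Q t := by
    intro s t
    refine PreconnectedSpace.induction₂' (fun s t => Q s ↔ Q t) (fun s => ?_) ⟨fun _ _ _ h h' => h.trans h'⟩ s t
    obtain ⟨k, hk⟩ := V.hcov (c s)
    have hopen : IsOpen (c ⁻¹' V.U k) := (V.ho k).preimage c.continuous
    obtain ⟨ε, hε, hb⟩ := Metric.isOpen_iff.mp hopen s hk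
    filter_upwards [Metric.ball_mem_nhds s hε] with t ht
    have hu : ∀ u ∈ Set.uIcc s t, c u ∈ V.U k := by
      intro u hu
      apply hb
      rw [Metric.mem_ball, Subtype.dist_eq, Real.dist_eq] at ht ⊢
      refine lt_of_le_of_lt ?_ ht
      apply Set.abs_sub_left_of_mem_uIcc
      rw [Set.mem_uIcc] at hu ⊢
      exact hu
    have := hmv s t k hu
    have h' := hmv t s k (by rwa [Set.uIcc_comm])
    exact ⟨⟨this, h'⟩, ⟨h', this⟩⟩
  exact (hc 0 s).mp h0

lemma gen (k0 : K) (b : R) : V.E k0 b = ⊤ := by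
  rw [eq_top_iff]
  intro g _
  obtain ⟨c, rfl⟩ := exists_cl (x := V.r b) (y := V.r b) g
  have hk : c 1 ∈ V.U k0 := by rw [c.target]; exact V.hr k0 b
  have := V.gen_aux k0 b c 1 k0 hk
  have h1 : V.e k0 hk (V.hr k0 b) = cl ((Path.refl (V.r b)).cast c.target rfl) :=
      V.e_eq k0 _ _ _ (fun t => V.hr k0 b)
  rw [h1, ← cl_trans] at this
  have h2 : ((c.subpath 0 1).cast c.source.symm rfl).trans ((Path.refl (V.r b)).cast c.target rfl)
    = c.trans (Path.refl _) := by
    ext t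
    rw [Path.trans_apply, Path.trans_apply]
    split_ifs <;> simp
  rw [h2, cl_trans, cl_refl, Category.comp_id] at this
  exact this

end Cov
end MF
end

section
open CategoryTheory unitInterval
open scoped BigOperators

namespace MF
variable {n : ℕ} {a : Fin n → Fin 3 → ℝ}

/-- complex vector with given real and imaginary parts -/
noncomputable def cx (x y : Fin 3 → ℝ) : Fin 3 → ℂ := fun k => (x k : ℂ) + Complex.I * (y k : ℂ)

lemma lf_cx (i : Fin n) (x y : Fin 3 → ℝ) :
    lf a i (cx x y) = ((a i ⬝ᵥ x : ℝ) : ℂ) + Complex.I * ((a i ⬝ᵥ y : ℝ) : ℂ) := by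
  unfold lf cx dotProduct
  push_cast
  rw [Finset.mul_sum, ← Finset.sum_add_distrib]
  refine Finset.sum_congr rfl fun k _ => ?_
  ring

lemma re_lf_cx (i : Fin n) (x y : Fin 3 → ℝ) : (lf a i (cx x y)).re = a i ⬝ᵥ x := by
  rw [lf_cx]; simp

lemma im_lf_cx (i : Fin n) (x y : Fin 3 → ℝ) : (lf a i (cx x y)).im = a i ⬝ᵥ y := by
  rw [lf_cx]; simp

lemma cx_re_im (z : Fin 3 → ℂ) : cx (fun k => (z k).re) (fun k => (z k).im) = z := by
  funext k
  apply Complex.ext <;> simp [cx]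

lemma re_lf (i : Fin n) (z : Fin 3 → ℂ) : (lf a i z).re = a i ⬝ᵥ (fun k => (z k).re) := by
  conv_lhs => rw [← cx_re_im z]
  rw [re_lf_cx]

lemma im_lf (i : Fin n) (z : Fin 3 → ℂ) : (lf a i z).im = a i ⬝ᵥ (fun k => (z k).im) := by
  conv_lhs => rw [← cx_re_im z]
  rw [im_lf_cx]

/-- open star-shaped sets -/
def WW (C : Gen a) : Set (Fin 3 → ℂ) :=
  {z | ∀ i, (lf a i z).re ≠ 0 ∨ 0 < (lf a i z).im * (a i ⬝ᵥ C.1)}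

lemma WW_sub (C : Gen a) : WW C ⊆ XX a := by
  intro z hz i h
  have := hz i
  rw [h] at this
  simp at this

lemma WW_open (C : Gen a) : IsOpen (WW C) := by
  have : WW C = ⋂ i, {z | (lf a i z).re ≠ 0 ∨ 0 < (lf a i z).im * (a i ⬝ᵥ C.1)} := by
    ext z; simp [WW]
  rw [this]
  refine isOpen_iInter_of_finite fun i => ?_
  have hc := continuous_lf (a := a) i
  have h1 : IsOpen {z | (lf a i z).re ≠ 0} :=
    isOpen_ne_fun (Complex.continuous_re.comp hc) continuous_const
  have h2 : IsOpen {z | 0 < (lf a i z).im * (a i ⬝ᵥ C.1)} :=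
    isOpen_lt continuous_const ((Complex.continuous_im.comp hc).mul continuous_const)
  exact h1.union h2

lemma lf_comb (i : Fin n) (u v : Fin 3 → ℂ) (s t : ℝ) :
    lf a i (s • u + t • v) = s * lf a i u + t * lf a i v := by
  have : (s • u + t • v) = ((s : ℂ) • u + (t : ℂ) • v) := by
    funext k; simp
  rw [this, lf_add, lf_smul, lf_smul]

lemma WW_star (C : Gen a) : StarConvex ℝ (cx 0 C.1) (WW C) := by
  intro z hz s t hs ht hst i
  rw [lf_comb]
  have h1 := re_lf_cx (a := a) i 0 C.1
  have h2 := im_lf_cx (a := a) i 0 C.1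
  simp only [dotProduct_zero] at h1
  have hC := C.2 i
  have hC2 : 0 < (a i ⬝ᵥ C.1) * (a i ⬝ᵥ C.1) := mul_self_pos.mpr hC
  simp only [Complex.add_re, Complex.add_im, Complex.re_ofReal_mul, Complex.im_ofReal_mul, h1, h2,
    mul_zero, zero_add]
  rcases eq_or_lt_of_le ht with h0 | h0
  · right
    have : s = 1 := by linarith
    rw [← h0, this]; linarith
  · rcases hz i with h | h
    · left; exact mul_ne_zero h0.ne' h
    · right
      have : 0 < t * ((lf a i z).im * (a i ⬝ᵥ C.1)) := mul_pos h0 h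
      have h3 : 0 ≤ s * ((a i ⬝ᵥ C.1) * (a i ⬝ᵥ C.1)) := mul_nonneg hs hC2.le
      nlinarith

/-- inclusion -/
def jW (C : Gen a) : C(WW C, XX a) := ⟨fun z => ⟨z.1, WW_sub C z.2⟩, by fun_prop⟩

instance (C : Gen a) : ContractibleSpace (WW C) :=
  (WW_star C).contractibleSpace ⟨cx 0 C.1, by
    intro i; right
    rw [im_lf_cx]
    exact mul_self_pos.mpr (C.2 i)⟩

/-- linear segments inside the complement -/
lemma seg_joined (S : Set (Fin 3 → ℂ)) (hS : S ⊆ XX a) (u v : XX a)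
    (h : ∀ t : ℝ, 0 ≤ t → t ≤ 1 → (1 - t) • u.1 + t • v.1 ∈ S) :
    JoinedIn ((Subtype.val : XX a → _) ⁻¹' S) u v := by
  refine ⟨
    { toFun := fun t => ⟨(1 - t.1) • u.1 + t.1 • v.1, hS (h t.1 t.2.1 t.2.2)⟩
      continuous_toFun := by fun_prop
      source' := by ext; simp
      target' := by ext; simp }, fun t => h t.1 t.2.1 t.2.2⟩

/-- real generic points as points of the complement -/
noncomputable def rp (x : Gen a) : XX a := ⟨cx x.1 0, fun i h => by
  have := re_lf_cx (a := a) i x.1 0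
  rw [h] at this
  exact x.2 i this.symm⟩

lemma cx_mem (x y : Fin 3 → ℝ) (hx : ∀ i, a i ⬝ᵥ x ≠ 0 ∨ a i ⬝ᵥ y ≠ 0) : cx x y ∈ XX a := by
  intro i h
  have h1 := re_lf_cx (a := a) i x y
  have h2 := im_lf_cx (a := a) i x y
  rw [h] at h1 h2
  rcases hx i with h | h
  · exact h h1.symm
  · exact h h2.symm

/-- the cover of the complement -/
noncomputable def cov (a : Fin n → Fin 3 → ℝ) (ha : ∀ i, a i ≠ 0) : Cov (XX a) (Gen a) (Gen a) where
  U C := Subtype.val ⁻¹' (WW C)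
  ho C := (WW_open C).preimage continuous_subtype_val
  hj C u v hu hv := by
    let p := PathConnectedSpace.somePath (⟨u.1, hu⟩ : WW C) ⟨v.1, hv⟩
    exact ⟨p.map (jW C).continuous, fun t => (p t).2⟩
  hh C u v p q hp hq := by
    let p' : Path (⟨u.1, hp 0 |> fun h => by simpa using h⟩ : WW C)
        ⟨v.1, hp 1 |> fun h => by simpa using h⟩ :=
      { toFun := fun t => ⟨(p t).1, hp t⟩
        continuous_toFun := by fun_prop
        source' := by ext; simp
        target' := by ext; simp }
    let q' : Path (⟨u.1, hp 0 |> fun h => by simpa using h⟩ : WW C)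
        ⟨v.1, hp 1 |> fun h => by simpa using h⟩ :=
      { toFun := fun t => ⟨(q t).1, hq t⟩
        continuous_toFun := by fun_prop
        source' := by ext; simp
        target' := by ext; simp }
    exact (SimplyConnectedSpace.paths_homotopic p' q').map (jW C)
  r := rp
  hr C x := fun i => by
    left
    show (lf a i (cx x.1 0)).re ≠ 0
    rw [re_lf_cx]; exact x.2 i
  hcov z := by
    obtain ⟨η⟩ := exists_gen a ha
    refine ⟨comp (fun k => (z.1 k).im) η, fun i => ?_⟩
    by_cases h : (lf a i z.1).re = 0
    · right
      have h2 : (lf a i z.1).im ≠ 0 := fun h' => z.2 i (Complex.ext h h')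
      have h3 := sg_comp (a := a) (fun k => (z.1 k).im) η i
      have h4 := sg_mul_pos (comp (fun k => (z.1 k).im) η) i
      rw [← im_lf, if_neg h2] at h3
      rw [h3] at h4
      split_ifs at h4 with h5
      · push_cast at h4
        rw [one_mul] at h4
        exact mul_pos h5 h4
      · push_cast at h4
        have h6 : (lf a i z.1).im < 0 := lt_of_le_of_ne (not_lt.mp h5) h2
        exact mul_pos_of_neg_of_neg h6 (by linarith)
    · left; exact h
  hmeet C D z hC hD := by
    set x' := comp (fun k => (z.1 k).re) C with hx'
    refine ⟨x', ?_⟩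
    have key : ∀ (E : Gen a), z.1 ∈ WW E → ∀ t : ℝ, 0 ≤ t → t ≤ 1 →
        (1 - t) • z.1 + t • (rp x').1 ∈ WW E := by
      intro E hE t h0 h1 i
      rw [lf_comb]
      have e1 : (lf a i (rp x').1).re = a i ⬝ᵥ x'.1 := re_lf_cx _ _ _
      have e2 : (lf a i (rp x').1).im = 0 := by
        have := im_lf_cx (a := a) i x'.1 0
        rwa [dotProduct_zero] at this
      simp only [Complex.add_re, Complex.add_im, Complex.re_ofReal_mul, Complex.im_ofReal_mul, e1,
        e2, mul_zero, add_zero]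
      rcases eq_or_lt_of_le h0 with h | h
      · subst h
        simpa using hE i
      · left
        by_cases hr : (lf a i z.1).re = 0
        · rw [hr, mul_zero, zero_add]
          exact mul_ne_zero h.ne' (x'.2 i)
        · have h3 := sg_comp (a := a) (fun k => (z.1 k).re) C i
          have h4 := sg_mul_pos x' i
          rw [← re_lf, if_neg hr, ← hx'] at h3
          rw [h3] at h4
          have h1' : 0 ≤ 1 - t := by linarith
          split_ifs at h4 with h5
          · push_cast at h4
            rw [one_mul] at h4
            have := mul_pos h h4
            have := mul_nonneg h1' h5.le
            linarith
          · push_cast at h4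
            have h6 : 0 ≤ -(lf a i z.1).re := by linarith [not_lt.mp h5]
            have := mul_pos h h4
            have := mul_nonneg h1' h6
            intro h9
            nlinarith
    exact seg_joined (WW C ∩ WW D) (fun z hz => WW_sub C hz.1) z (rp x')
      (fun t h0 h1 => ⟨key C hC t h0 h1, key D hD t h0 h1⟩)

lemma joined_real (C D x y : Gen a) (h : ∀ i, sg C i = sg D i ∨ sg x i = sg y i) :
    JoinedIn ((Subtype.val : XX a → _) ⁻¹' (WW C ∩ WW D)) (rp x) (rp y) := by
  have hsub : WW C ∩ WW D ⊆ XX a := fun z hz => WW_sub C hz.1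
  -- vertical segments
  have hv : ∀ x : Gen a, JoinedIn ((Subtype.val : XX a → _) ⁻¹' (WW C ∩ WW D)) (rp x)
      ⟨cx x.1 C.1, cx_mem _ _ fun i => Or.inl (x.2 i)⟩ := by
    intro x
    refine seg_joined _ hsub _ _ fun t h0 h1 => ?_
    have : ∀ i, (lf a i ((1 - t) • (rp x).1 + t • (cx x.1 C.1))).re ≠ 0 := by
      intro i
      rw [lf_comb]
      have e1 : (lf a i (rp x).1).re = a i ⬝ᵥ x.1 := re_lf_cx _ _ _
      simp only [Complex.add_re, Complex.re_ofReal_mul, e1, re_lf_cx]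
      have : (1 - t) * (a i ⬝ᵥ x.1) + t * (a i ⬝ᵥ x.1) = a i ⬝ᵥ x.1 := by ring
      rw [this]; exact x.2 i
    exact ⟨fun i => Or.inl (this i), fun i => Or.inl (this i)⟩
  refine ((hv x).trans ?_).trans (hv y).symm
  refine seg_joined _ hsub _ _ fun t h0 h1 => ?_
  have hre : ∀ i, (lf a i ((1 - t) • (cx x.1 C.1) + t • (cx y.1 C.1))).re =
      (1 - t) * (a i ⬝ᵥ x.1) + t * (a i ⬝ᵥ y.1) := by
    intro i
    rw [lf_comb]
    simp only [Complex.add_re, Complex.re_ofReal_mul, re_lf_cx]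
  have him : ∀ i, (lf a i ((1 - t) • (cx x.1 C.1) + t • (cx y.1 C.1))).im = a i ⬝ᵥ C.1 := by
    intro i
    rw [lf_comb]
    simp only [Complex.add_im, Complex.im_ofReal_mul, im_lf_cx]
    ring
  constructor
  · intro i
    right
    rw [him]
    exact mul_self_pos.mpr (C.2 i)
  · intro i
    rcases h i with h | h
    · right
      rw [him]
      exact (sg_eq_iff _ _ _).mp h
    · left
      rw [hre]
      have h2 := (sg_eq_iff _ _ _).mp h
      have h3 := x.2 i
      intro h4
      have h5 : 0 < (a i ⬝ᵥ x.1) * (a i ⬝ᵥ x.1) := mul_self_pos.mpr h3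
      have h6 : (1 - t) * ((a i ⬝ᵥ x.1) * (a i ⬝ᵥ x.1)) + t * ((a i ⬝ᵥ x.1) * (a i ⬝ᵥ y.1)) = 0 := by
        linear_combination (a i ⬝ᵥ x.1) * h4
      rcases eq_or_lt_of_le h0 with h | h
      · subst h; linarith
      · have := mul_pos h h2
        have := mul_nonneg (by linarith : 0 ≤ 1 - t) h5.le
        linarith

lemma wnd_WW (C : Gen a) (i : Fin n) {u v : XX a} (p : Path u v) (hp : ∀ t, (p t).1 ∈ WW C) :
    wnd (fi a i) (fi_ne i) p = Complex.log (lf a i v.1 / (Complex.I * (a i ⬝ᵥ C.1 : ℝ))) -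
      Complex.log (lf a i u.1 / (Complex.I * (a i ⬝ᵥ C.1 : ℝ))) := by
  have hC := C.2 i
  have hCc : ((a i ⬝ᵥ C.1 : ℝ) : ℂ) ≠ 0 := by exact_mod_cast hC
  have hne : Complex.I * ((a i ⬝ᵥ C.1 : ℝ) : ℂ) ≠ 0 := mul_ne_zero Complex.I_ne_zero hCc
  have hs : ∀ z ∈ WW C, lf a i z / (Complex.I * (a i ⬝ᵥ C.1 : ℝ)) ∈ Complex.slitPlane := by
    intro z hz
    have e : lf a i z / (Complex.I * (a i ⬝ᵥ C.1 : ℝ)) =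
        (((lf a i z).im / (a i ⬝ᵥ C.1) : ℝ) : ℂ) +
        ((-(lf a i z).re / (a i ⬝ᵥ C.1) : ℝ) : ℂ) * Complex.I := by
      rw [div_eq_iff hne]
      conv_lhs => rw [← Complex.re_add_im (lf a i z)]
      push_cast
      field_simp
      linear_combination ((lf a i z).re : ℂ) * Complex.I_sq
    rw [e, Complex.mem_slitPlane_iff]
    simp only [Complex.add_re, Complex.ofReal_re, Complex.mul_re, Complex.I_re, mul_zero,
      Complex.ofReal_im, Complex.I_im, mul_one, sub_self, add_zero, Complex.add_im, Complex.mul_im,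
      zero_add]
    rcases hz i with h | h
    · right
      exact div_ne_zero (neg_ne_zero.mpr h) hC
    · left
      have : (lf a i z).im / (a i ⬝ᵥ C.1) = (lf a i z).im * (a i ⬝ᵥ C.1) /
        ((a i ⬝ᵥ C.1) * (a i ⬝ᵥ C.1)) := by field_simp
      rw [this]; exact div_pos h (mul_self_pos.mpr hC)
  have hcont : Continuous fun t => lf a i (p t).1 / (Complex.I * (a i ⬝ᵥ C.1 : ℝ)) :=
    ((continuous_lf i).comp (continuous_subtype_val.comp p.continuous)).div_const _
  rw [wnd_eq _ _ _ (fun t => Complex.log (lf a i (p t).1 / (Complex.I * (a i ⬝ᵥ C.1 : ℝ))) +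
    Complex.log (Complex.I * (a i ⬝ᵥ C.1 : ℝ)))
    ((hcont.clog (fun t => hs _ (hp t))).add continuous_const)]
  · simp
  · intro t
    rw [Complex.exp_add, Complex.exp_log hne, Complex.exp_log]
    · show _ = lf a i (p t).1
      field_simp
    · exact div_ne_zero ((p t).2 i) hne

lemma log_real (r c : ℝ) (hr : r ≠ 0) (hc : c ≠ 0) (s : ℝ) (hs : s = if 0 < r * c then 1 else -1) :
    Complex.log ((r : ℂ) / (Complex.I * (c : ℝ))) =
      ((Real.log r - Real.log c : ℝ) : ℂ) - (s : ℂ) * (Real.pi / 2 * Complex.I) := by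
  have hcc : (c : ℂ) ≠ 0 := by exact_mod_cast hc
  have e : (r : ℂ) / (Complex.I * (c : ℝ)) = ((r / c : ℝ) : ℂ) * (-Complex.I) := by
    rw [div_eq_iff (mul_ne_zero Complex.I_ne_zero hcc)]
    push_cast
    field_simp
    linear_combination (r : ℂ) * Complex.I_sq
  have hrc : r / c = r * c / (c * c) := by field_simp
  rw [← Real.log_div hr hc]
  split_ifs at hs with h
  · have h2 : 0 < r / c := by rw [hrc]; exact div_pos h (mul_self_pos.mpr hc)
    rw [e, Complex.log_ofReal_mul h2 (by simp), Complex.log_neg_I, hs]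
    push_cast; ring
  · have h3 : r * c < 0 := lt_of_le_of_ne (not_lt.mp h) (mul_ne_zero hr hc)
    have h2 : 0 < -(r / c) := by
      rw [hrc]
      have h4 : 0 < c * c := mul_self_pos.mpr hc
      rw [← neg_div]
      apply div_pos _ h4; linarith
    have e' : ((r / c : ℝ) : ℂ) * (-Complex.I) = ((-(r / c) : ℝ) : ℂ) * Complex.I := by
      push_cast; ring
    rw [e, e', Complex.log_ofReal_mul h2 (by simp), Complex.log_I, hs, Real.log_neg_eq_log]
    push_cast; ring

lemma sg_mul (C x : Gen a) (i : Fin n) :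
    ((sg C i * sg x i : ℤ) : ℝ) = if 0 < (a i ⬝ᵥ x.1) * (a i ⬝ᵥ C.1) then 1 else -1 := by
  have h := sg_eq_iff x C i
  by_cases h1 : sg x i = sg C i
  · rw [if_pos (h.mp h1), h1]
    rcases sg_cases C i with h | h <;> rw [h] <;> norm_num
  · rw [if_neg (fun h' => h1 (h.mpr h'))]
    rcases sg_cases C i with h | h <;> rcases sg_cases x i with h' | h' <;>
      first
      | exact absurd (h'.trans h.symm) h1
      | (rw [h, h']; norm_num)

lemma wq_T (ha : ∀ i, a i ≠ 0) (C x y : Gen a) (i : Fin n) :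
    wq (fi a i) (fi_ne i) ((cov a ha).T C x y) =
      ((Real.log (a i ⬝ᵥ y.1) - Real.log (a i ⬝ᵥ x.1) : ℝ) : ℂ) -
      ((sg C i * (sg y i - sg x i) : ℤ) : ℂ) * (Real.pi / 2 * Complex.I) := by
  unfold Cov.T Cov.e
  rw [wq_cl, wnd_WW C i _ (fun t => JoinedIn.somePath_mem ((cov a ha).hj C _ _ ((cov a ha).hr C x) ((cov a ha).hr C y)) t)]
  have hx : ∀ x : Gen a, lf a i ((cov a ha).r x).1 = ((a i ⬝ᵥ x.1 : ℝ) : ℂ) := by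
    intro x
    have : lf a i ((cov a ha).r x).1 = lf a i (cx x.1 0) := rfl
    rw [this, lf_cx]; simp
  rw [hx, hx, log_real _ _ (x.2 i) (C.2 i) _ (sg_mul C x i),
    log_real _ _ (y.2 i) (C.2 i) _ (sg_mul C y i)]
  push_cast
  ring

/-- the geometric datum -/
noncomputable def datum (a : Fin n → Fin 3 → ℝ) (ha : ∀ i, a i ≠ 0) (C0 R0 : Gen a) :
    Datum a (FundamentalGroup (XX a) (rp R0)) where
  γ := (cov a ha).γ C0 R0
  C0 := C0
  R0 := R0
  hC0 x := (cov a ha).T_comp' C0 R0 x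
  hR0 C := by
    show (cov a ha).T C0 R0 R0 ≫ (cov a ha).T C R0 R0 = 𝟙 _
    rw [Cov.T_self, Cov.T_self, Category.comp_id]
  rel C D x y h := (cov a ha).γ_rel C0 R0 C D x y (joined_real C D x y h)
  w :=
    { toFun := fun g => Multiplicative.ofAdd fun i => (wi (fi a i) (fi_ne i) (rp R0) g).toAdd
      map_one' := by
        rw [← ofAdd_zero]; congr 1; funext i; rw [map_one]; rfl
      map_mul' := fun g h => by
        rw [← ofAdd_add]; congr 1; funext i; rw [map_mul]; rfl }
  κ := 1
  hκ := Or.inl rfl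
  hw C x i := by
    have h := wi_spec (fi a i) (fi_ne i) ((cov a ha).γ C0 R0 C x)
    have h2 : wq (fi a i) (fi_ne i) ((cov a ha).γ C0 R0 C x) =
      wq (fi a i) (fi_ne i) ((cov a ha).T C0 R0 x) + wq (fi a i) (fi_ne i) ((cov a ha).T C x R0) :=
      wq_comp _ _ _ _
    rw [wq_T, wq_T] at h2
    rw [h2] at h
    set W : ℤ := (wi (fi a i) (fi_ne i) _ ((cov a ha).γ C0 R0 C x)).toAdd with hW
    show 4 * W = 1 * ((sg C i - sg C0 i) * (sg x i - sg R0 i))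
    have hne : (Real.pi / 2 * Complex.I : ℂ) ≠ 0 := by
      simp [Real.pi_ne_zero]
    have : ((4 * W : ℤ) : ℂ) = ((1 * ((sg C i - sg C0 i) * (sg x i - sg R0 i)) : ℤ) : ℂ) := by
      apply mul_right_cancel₀ hne
      push_cast at h ⊢
      linear_combination -h
    exact_mod_cast this
  gen := (cov a ha).gen C0 R0

lemma wq_fp {x y : XX a} (p : FundamentalGroupoid.mk x ⟶ FundamentalGroupoid.mk y) :
    wq (fp a) fp_ne p = ∑ i, wq (fi a i) (fi_ne i) p := by
  obtain ⟨p, rfl⟩ := exists_cl p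
  simp only [wq_cl]
  exact wnd_prod (fi a) fi_ne (fp a) fp_ne (fun x => rfl) p

lemma deg_iff (ha : ∀ i, a i ≠ 0) (C0 R0 : Gen a) (g : FundamentalGroup (XX a) (rp R0)) :
    (datum a ha C0 R0).deg g = 0 ↔ wq (fp a) fp_ne g = 0 := by
  have h1 : wq (fp a) fp_ne g = ∑ i, wq (fi a i) (fi_ne i) g := wq_fp (x := rp R0) (y := rp R0) g
  have h2 : (datum a ha C0 R0).deg g = ∑ i, (wi (fi a i) (fi_ne i) (rp R0) g).toAdd := rfl
  rw [h1, h2]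
  simp only [wi_spec]
  rw [← Finset.sum_mul]
  have hne : (2 * Real.pi * Complex.I : ℂ) ≠ 0 := Complex.two_pi_I_ne_zero
  constructor
  · intro h
    have : ((∑ i, (wi (fi a i) (fi_ne i) (rp R0) g).toAdd : ℤ) : ℂ) = 0 := by rw [h]; simp
    push_cast at this
    rw [this, zero_mul]
  · intro h
    rcases mul_eq_zero.mp h with h | h
    · exact_mod_cast h
    · exact absurd h hne

/-- the complement is path connected -/
lemma joined (ha : ∀ i, a i ≠ 0) (z : XX a) (x : Gen a) : Joined z (rp x) := by
  obtain ⟨C, hC⟩ := (cov a ha).hcov z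
  exact ((cov a ha).hj C z (rp x) hC ((cov a ha).hr C x)).joined

theorem milnor_equiv (hn : n ≠ 0) (ha : ∀ i, a i ≠ 0) (C0 R0 : Gen a) (z₀ : FF a) :
    Nonempty (FundamentalGroup (FF a) z₀ ≃* (datum a ha C0 R0).degHom.ker) := by
  obtain ⟨c⟩ := joined ha (inc a z₀) R0
  obtain ⟨f, hf, hr⟩ := equiv_ker hn z₀ (rp R0) c
  have : f.range = (datum a ha C0 R0).degHom.ker := by
    ext g
    rw [hr, Datum.mem_ker, deg_iff]
  rw [← this]
  exact ⟨MonoidHom.ofInjective hf⟩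

theorem milnor_final {p d : ℕ} (hn : n ≠ 0) (ha : ∀ i, a i ≠ 0) (C0 R0 : Gen a) (z₀ : FF a)
    (Γ : Datum.Geo p d (datum a ha C0 R0)) :
    Nonempty (Additive (Abelianization (FundamentalGroup (FF a) z₀)) ≃+ (Fin (n - 1) → ℤ)) := by
  obtain ⟨f⟩ := milnor_equiv hn ha C0 R0 z₀
  obtain ⟨g⟩ := (datum a ha C0 R0).final Γ
  exact ⟨(MulEquiv.toAdditive f.abelianizationCongr).trans g⟩

end MF
end

section
open scoped BigOperators

namespace MF
variable {n : ℕ} {a : Fin n → Fin 3 → ℝ}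

lemma cross_unique (hind : ∀ i j : Fin n, i ≠ j → LinearIndependent ℝ ![a i, a j])
    {i j : Fin n} (hij : i ≠ j) (z : Fin 3 → ℂ) (hi : lf a i z = 0) (hj : lf a j z = 0) :
    ∃ c : ℂ, z = c • cx (crossProduct (a i) (a j)) 0 := by
  have hN := cross_ne hind hij
  obtain ⟨k, hk⟩ : ∃ k, crossProduct (a i) (a j) k ≠ 0 := by
    by_contra h
    push Not at h
    exact hN (funext h)
  have hkc : ((crossProduct (a i) (a j) k : ℝ) : ℂ) ≠ 0 := by exact_mod_cast hk
  refine ⟨z k / (crossProduct (a i) (a j) k : ℝ), funext fun l => ?_⟩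
  have key : z l * ((crossProduct (a i) (a j) k : ℝ) : ℂ) =
      z k * ((crossProduct (a i) (a j) l : ℝ) : ℂ) := by
    simp only [lf, Fin.sum_univ_three] at hi hj
    simp only [cross_apply]
    fin_cases k <;> fin_cases l <;> simp <;> try ring1
    · linear_combination (a j 2 : ℂ) * hi - (a i 2 : ℂ) * hj
    · linear_combination -(a j 1 : ℂ) * hi + (a i 1 : ℂ) * hj
    · linear_combination -(a j 2 : ℂ) * hi + (a i 2 : ℂ) * hj
    · linear_combination (a j 0 : ℂ) * hi - (a i 0 : ℂ) * hj
    · linear_combination (a j 1 : ℂ) * hi - (a i 1 : ℂ) * hj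
    · linear_combination -(a j 0 : ℂ) * hi + (a i 0 : ℂ) * hj
  have : (z k / (crossProduct (a i) (a j) k : ℝ)) • cx (crossProduct (a i) (a j)) 0 =
      fun l => z k / ((crossProduct (a i) (a j) k : ℝ) : ℂ) * ((crossProduct (a i) (a j) l : ℝ) : ℂ) := by
    funext l; simp [cx]
  rw [this]
  simp only
  rw [div_mul_eq_mul_div, eq_div_iff hkc, key]

lemma exists_other {v : Fin 3 → ℂ} (j : Fin n)
    (h : 2 ≤ Nat.card {i : Fin n // lf a i v = 0}) : ∃ k, k ≠ j ∧ lf a k v = 0 := by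
  have : Fintype {i : Fin n // lf a i v = 0} := Fintype.ofFinite _
  rw [Nat.card_eq_fintype_card] at h
  obtain ⟨x, y, hxy⟩ := Fintype.one_lt_card_iff.mp (by omega : 1 < Fintype.card {i : Fin n // lf a i v = 0})
  by_cases hx : x.1 = j
  · exact ⟨y.1, fun hy => hxy (Subtype.ext (hx.trans hy.symm)), y.2⟩
  · exact ⟨x.1, hx, x.2⟩

lemma lf_real (i : Fin n) (x : Fin 3 → ℝ) : lf a i (cx x 0) = ((a i ⬝ᵥ x : ℝ) : ℂ) := by
  rw [lf_cx]; simp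

lemma card_real (x : Fin 3 → ℝ) :
    Nat.card {i : Fin n // lf a i (cx x 0) = 0} = Datum.mult a x := by
  unfold Datum.mult
  simp only [lf_real, Complex.ofReal_eq_zero]

theorem main (p d : ℕ) (hp : Nat.Prime p) (hn : n = p ^ d)
    (ha : ∀ i, a i ≠ 0)
    (hind : ∀ i j : Fin n, i ≠ j → LinearIndependent ℝ ![a i, a j])
    (z₀ : FF a)
    (hall : ∀ i : Fin n, ∃ v : Fin 3 → ℂ, v ≠ 0 ∧ lf a i v = 0 ∧
      p ∣ Nat.card {i : Fin n // lf a i v = 0})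
    (j : Fin n) (v₀ : Fin 3 → ℂ) (hv₀ : v₀ ≠ 0) (hv₀j : lf a j v₀ = 0)
    (honly : ∀ w : Fin 3 → ℂ, w ≠ 0 → lf a j w = 0 → p ∣ Nat.card {i : Fin n // lf a i w = 0} →
      ∃ c : ℂ, w = c • v₀)
    (hother : ∃ u : Fin 3 → ℂ, u ≠ 0 ∧ lf a j u = 0 ∧ 2 ≤ Nat.card {i : Fin n // lf a i u = 0} ∧
      ∀ c : ℂ, u ≠ c • v₀) :
    Nonempty (Additive (Abelianization (FundamentalGroup (FF a) z₀)) ≃+ (Fin (n - 1) → ℤ)) := by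
  obtain ⟨v, hv, hvj, hpv⟩ := hall j
  have h2 : 2 ≤ Nat.card {i : Fin n // lf a i v = 0} := by
    have hne : Nat.card {i : Fin n // lf a i v = 0} ≠ 0 := by
      have : Nonempty {i : Fin n // lf a i v = 0} := ⟨⟨j, hvj⟩⟩
      exact Nat.card_pos.ne'
    exact hp.two_le.trans (Nat.le_of_dvd (Nat.pos_of_ne_zero hne) hpv)
  obtain ⟨c0, hc0⟩ := honly v hv hvj hpv
  obtain ⟨k, hkj, hk⟩ := exists_other j h2
  have hc0' : c0 ≠ 0 := by rintro rfl; rw [zero_smul] at hc0; exact hv hc0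
  obtain ⟨c1, hc1⟩ := cross_unique hind hkj.symm v hvj hk
  set N := crossProduct (a j) (a k) with hN
  have hN0 : N ≠ 0 := cross_ne hind hkj.symm
  have hc1' : c1 ≠ 0 := by rintro rfl; rw [zero_smul] at hc1; exact hv hc1
  have hjN : a j ⬝ᵥ N = 0 := by rw [hN, dot_self_cross]
  -- v and v₀ are proportional to N
  have hv0N : v₀ = (c1 / c0) • cx N 0 := by
    have : c0 • v₀ = c1 • cx N 0 := by rw [← hc0, ← hc1]
    rw [div_eq_inv_mul, mul_smul, ← this, smul_smul, inv_mul_cancel₀ hc0', one_smul]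
  have hNv0 : cx N 0 = (c0 / c1) • v₀ := by
    rw [hv0N, smul_smul]
    have : c0 / c1 * (c1 / c0) = 1 := by field_simp
    rw [this, one_smul]
  have hNex : ∃ k, a k ⬝ᵥ N ≠ 0 := by
    by_contra hcon
    push Not at hcon
    obtain ⟨u, hu, huj, hu2, hun⟩ := hother
    obtain ⟨k', hk'j, hk'⟩ := exists_other j hu2
    obtain ⟨d1, hd1⟩ := cross_unique hind hk'j.symm u huj hk'
    obtain ⟨d2, hd2⟩ := cross_unique hind hk'j.symm (cx N 0) (by rw [lf_real, hjN]; simp)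
      (by rw [lf_real, hcon]; simp)
    have hd2' : d2 ≠ 0 := by
      rintro rfl
      rw [zero_smul] at hd2
      apply hv₀
      rw [hv0N, hd2, smul_zero]
    apply hun (d1 / d2 * (c0 / c1))
    rw [mul_smul, ← hNv0, hd2, smul_smul, div_mul_cancel₀ _ hd2']
    exact hd1
  set h0 := crossProduct (a j) N with hh0
  have hjh0 : a j ⬝ᵥ h0 = 0 := by rw [hh0, dot_self_cross]
  have hNh0 : N ⬝ᵥ h0 = 0 := by rw [hh0, dot_cross_self]
  have hh00 : h0 ≠ 0 := by
    intro h
    have h3 : h0 ⬝ᵥ h0 = (a j ⬝ᵥ a j) * (N ⬝ᵥ N) - (a j ⬝ᵥ N) * (N ⬝ᵥ a j) := by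
      rw [hh0, cross_dot_cross]
    rw [h, hjN, zero_dotProduct, zero_mul, sub_zero] at h3
    rcases mul_eq_zero.mp h3.symm with h4 | h4
    · exact ha j (dotProduct_self_eq_zero.mp h4)
    · exact hN0 (dotProduct_self_eq_zero.mp h4)
  have hmult : ∀ s : ℝ, ¬ p ∣ Datum.mult a (h0 + s • N) := by
    intro s hs
    rw [← card_real] at hs
    obtain ⟨c, hc⟩ : ∃ c : ℂ, cx (h0 + s • N) 0 = c • cx N 0 := by
      by_cases hw : cx (h0 + s • N) 0 = 0
      · exact ⟨0, by rw [hw, zero_smul]⟩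
      · obtain ⟨c, hc⟩ := honly _ hw (by
          rw [lf_real, dotProduct_add, dotProduct_smul, hjh0, hjN]; simp) hs
        exact ⟨c * (c1 / c0), by rw [hc, mul_smul, ← hv0N]⟩
    -- real part
    have hre : h0 + s • N = c.re • N := by
      funext l
      have := congrArg Complex.re (congrFun hc l)
      simpa [cx] using this
    have h5 : h0 ⬝ᵥ h0 = 0 := by
      have h6 : h0 = (c.re - s) • N := by
        rw [sub_smul, ← hre]; abel
      calc h0 ⬝ᵥ h0 = ((c.re - s) • N) ⬝ᵥ h0 := by rw [← h6]
        _ = 0 := by rw [smul_dotProduct, hNh0, smul_zero]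
    exact hh00 (dotProduct_self_eq_zero.mp h5)
  obtain ⟨η⟩ := exists_gen a ha
  obtain ⟨R0, R1, e1, e2, e3⟩ := exists_facet hind j η
  have hn0 : n ≠ 0 := fun h => by subst h; exact j.elim0
  exact milnor_final (p := p) (d := d) hn0 ha (comp h0 η) R0 z₀
    { hp := hp, hn := hn, hind := hind, j := j, R1 := R1
      hR1j := by
        show sg R1 j ≠ sg R0 j
        rw [e1]; exact e2
      hR1 := fun i hi => (e3 i hi).symm
      h0 := h0, r := N, hh0 := hjh0, hr := hjN, hmult := hmult
      hC0 := Datum.star_comp h0 η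
      hN := hNex }

end MF
end

/-- Let `n = p^d` for an odd prime `p`. If every line of a
complexified-real central arrangement of `n` planes in `ℂ³` contains a multiple point of
multiplicity divisible by `p`, and some line `ker ℓⱼ` has only one multiple point of
multiplicity divisible by `p` and contains at least one other multiple point, then the
first homology of the Milnor fiber is free abelian of rank `p^d − 1`. -/
theorem milnor_fiber_homology_free_prime_power
    (p d : ℕ) (hp : Nat.Prime p) (hodd : p ≠ 2) (hd : 1 ≤ d)
    (n : ℕ) (hn : n = p ^ d)
    (a : Fin n → Fin 3 → ℝ)
    (ha : ∀ i, a i ≠ 0)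
    (hind : ∀ i j : Fin n, i ≠ j → LinearIndependent ℝ ![a i, a j])
    (ℓ : Fin n → (Fin 3 → ℂ) → ℂ)
    (hℓ : ∀ i z, ℓ i z = ∑ k, (a i k : ℂ) * z k)
    (m : (Fin 3 → ℂ) → ℕ)
    (hm : ∀ v, m v = Nat.card {i : Fin n // ℓ i v = 0})
    (F : Set (Fin 3 → ℂ)) (hF : F = {z | ∏ i, ℓ i z = 1})
    (z₀ : F)
    (hall : ∀ i : Fin n, ∃ v : Fin 3 → ℂ, v ≠ 0 ∧ ℓ i v = 0 ∧ p ∣ m v)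
    (j : Fin n) (v₀ : Fin 3 → ℂ) (hv₀ : v₀ ≠ 0) (hv₀j : ℓ j v₀ = 0)
    (honly : ∀ w : Fin 3 → ℂ, w ≠ 0 → ℓ j w = 0 → p ∣ m w → ∃ c : ℂ, w = c • v₀)
    (hother : ∃ u : Fin 3 → ℂ, u ≠ 0 ∧ ℓ j u = 0 ∧ 2 ≤ m u ∧ ∀ c : ℂ, u ≠ c • v₀) :
    Nonempty (Additive (Abelianization (FundamentalGroup F z₀)) ≃+ (Fin (p ^ d - 1) → ℤ)) := by
  obtain rfl : ℓ = MF.lf a := by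
    funext i z
    exact hℓ i z
  obtain rfl : m = fun v => Nat.card {i : Fin n // MF.lf a i v = 0} := funext hm
  have hF' : F = MF.FF a := hF
  clear hF
  subst hF'
  rw [← hn]
  exact MF.main p d hp hn ha hind z₀ hall j v₀ hv₀ hv₀j honly hother
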